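/- arXiv:2007.07526 — 3 statements merged into one kernel-verified Lean document; each statement's English description precedes it below -/
import Mathlib

section
/- Let O be a commutative ring, G a group, n ≥ 1, and A a G-graded O-algebra. Then the wreath product A≀Sₙ is a (G≀Sₙ)-graded O-algebra, with ((g₁,…,gₙ),σ)-component (A≀Sₙ)_{((g₁,…,gₙ),σ)} := (A_{g₁} ⊗ … ⊗ A_{gₙ}) ⊗ Oσ for each ((g₁,…,gₙ),σ) ∈ G≀Sₙ; that is, these O-submodules form a direct sum decomposition of A≀Sₙ and satisfy (A≀Sₙ)_x (A≀Sₙ)_y ⊆ (A≀Sₙ)_{xy} for all x, y ∈ G≀Sₙ. -/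
open scoped TensorProduct
open PiTensorProduct MulOpposite

/-- `𝒜` is a `G`-grading of the `O`-algebra `A`. -/
def IsAlgebraGrading (O : Type*) [CommRing O] {G : Type*} [Group G] {A : Type*}
    [Ring A] [Algebra O A] (𝒜 : G → Submodule O A) : Prop :=
  (1 : A) ∈ 𝒜 1 ∧
  (∀ ⦃g h : G⦄, ∀ a ∈ 𝒜 g, ∀ b ∈ 𝒜 h, a * b ∈ 𝒜 (g * h)) ∧
  (letI := Classical.decEq G; DirectSum.IsInternal 𝒜)

/-- The componentwise grading on a tensor product of graded modules: the
`(g₁,…,gₙ)`-component is spanned by the pure tensors of homogeneous elements. -/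
def tensorGrading (O : Type*) [CommRing O] {n : ℕ} {G : Fin n → Type*}
    {M : Fin n → Type*} [∀ i, AddCommGroup (M i)] [∀ i, Module O (M i)]
    (ℳ : ∀ i, G i → Submodule O (M i)) (g : ∀ i, G i) : Submodule O (⨂[O] i, M i) :=
  Submodule.span O {x | ∃ m : ∀ i, M i, (∀ i, m i ∈ ℳ i (g i)) ∧ x = tprod O m}

/-- The permutation action of `Sₙ` on `Gⁿ`, `^σ(g₁,…,gₙ) = (g_{σ⁻¹(1)},…,g_{σ⁻¹(n)})`. -/
def permMulAut (G : Type*) [Group G] (n : ℕ) :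
    Equiv.Perm (Fin n) →* MulAut (Fin n → G) where
  toFun σ :=
    { toEquiv := Equiv.arrowCongr σ (Equiv.refl G)
      map_mul' := fun _ _ => rfl }
  map_one' := by ext g i; rfl
  map_mul' := fun σ τ => by ext g i; rfl

/-- The wreath product `G ≀ Sₙ = Gⁿ ⋊ Sₙ`. -/
abbrev WreathGroup (G : Type*) [Group G] (n : ℕ) :=
  SemidirectProduct (Fin n → G) (Equiv.Perm (Fin n)) (permMulAut G n)

/-- `(e, s)` presents the `O`-algebra `W` as the wreath product `T ≀ Sₙ` of the
`O`-algebra `T` (typically `T = A^{⊗n}`, carrying an `Sₙ`-action `Φ`):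
`e` is injective, `W = ⊕_σ e(T)·s(σ)` as an `O`-module, and
`s(σ) e(t) = e(^σ t) s(σ)`. -/
def IsWreathPresentation (O : Type*) [CommRing O] {n : ℕ} {T W : Type*}
    [Ring T] [Algebra O T] [Ring W] [Algebra O W]
    (e : T →ₐ[O] W) (s : Equiv.Perm (Fin n) →* Wˣ)
    (Φ : Equiv.Perm (Fin n) →* (T ≃ₐ[O] T)) : Prop :=
  Function.Injective e ∧
  (letI := Classical.decEq (Equiv.Perm (Fin n));
    DirectSum.IsInternal fun σ : Equiv.Perm (Fin n) =>
      Submodule.map (LinearMap.mulRight O ((s σ : Wˣ) : W))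
        (Subalgebra.toSubmodule e.range)) ∧
  ∀ (σ : Equiv.Perm (Fin n)) (t : T),
    ((s σ : Wˣ) : W) * e t = e (Φ σ t) * ((s σ : Wˣ) : W)

/-- The `((g₁,…,gₙ),σ)`-component `(A_{g₁} ⊗ … ⊗ A_{gₙ}) ⊗ Oσ` of `A ≀ Sₙ`. -/
def wreathGrading (O : Type*) [CommRing O] {G : Type*} [Group G] {n : ℕ}
    {A W : Type*} [Ring A] [Algebra O A] [Ring W] [Algebra O W]
    (𝒜 : G → Submodule O A) (e : (⨂[O] _i : Fin n, A) →ₐ[O] W)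
    (s : Equiv.Perm (Fin n) →* Wˣ) (x : WreathGroup G n) : Submodule O W :=
  Submodule.map ((LinearMap.mulRight O ((s x.right : Wˣ) : W)).comp e.toLinearMap)
    (tensorGrading O (fun _ : Fin n => 𝒜) x.left)

/-!
The tensor product distributes over direct sums in each factor, so the `A_{g₁} ⊗ ⋯ ⊗ A_{gₙ}`
decompose `A^{⊗n}`; each summand `A^{⊗n}·σ` of `A ≀ Sₙ` is a copy of `A^{⊗n}` and inherits this
decomposition. For the product, `(t·σ)(u·τ) = (t·^σu)·στ`, and `σ` permutes the components of
`A^{⊗n}` as it permutes `Gⁿ`.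
-/

section InternalDirectSums

theorem iSupIndep_sigma {α ι : Type*} {κ : ι → Type*} [CompleteLattice α] [IsModularLattice α]
    {t : ι → α} {u : ∀ i, κ i → α} (ht : iSupIndep t) (hu : ∀ i, iSupIndep (u i))
    (hle : ∀ i j, u i j ≤ t i) : iSupIndep fun x : Σ i, κ i => u x.1 x.2 := by
  rintro ⟨i, j⟩
  have same_fiber : Disjoint (u i j) (⨆ (k) (_ : k ≠ j), u i k) := hu i j
  have other_fibers : Disjoint (u i j ⊔ ⨆ (k) (_ : k ≠ j), u i k) (⨆ (k) (_ : k ≠ i), t k) :=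
    (ht i).mono_left (sup_le (hle i j) (iSup₂_le fun k _ => hle i k))
  refine (same_fiber.disjoint_sup_right_of_disjoint_sup_left other_fibers).mono_right ?_
  refine iSup₂_le ?_
  rintro ⟨k, l⟩ hne
  by_cases hk : k = i
  · subst hk
    exact le_sup_of_le_left (le_iSup₂_of_le l (fun hl => hne (hl ▸ rfl)) le_rfl)
  · exact le_sup_of_le_right (le_iSup₂_of_le k hk (hle k l))

theorem isInternal_range_of_bijective_toModule {R ι M : Type*} {P : ι → Type*} [DecidableEq ι]
    [Semiring R] [AddCommMonoid M] [Module R M] [∀ i, AddCommMonoid (P i)] [∀ i, Module R (P i)]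
    (f : ∀ i, P i →ₗ[R] M) (hf : Function.Bijective (DirectSum.toModule R ι M f)) :
    DirectSum.IsInternal fun i => LinearMap.range (f i) := by
  let q : DirectSum ι P →ₗ[R] DirectSum ι fun i => LinearMap.range (f i) :=
    DirectSum.lmap fun i => (f i).rangeRestrict
  have hq : Function.Surjective q :=
    (DirectSum.lmap_surjective _).2 fun i => (f i).surjective_rangeRestrict
  have hfactor : DirectSum.toModule R ι M f =
      DirectSum.coeLinearMap (fun i => LinearMap.range (f i)) ∘ₗ q := by
    ext i x
    simp [q]
  rw [hfactor, LinearMap.coe_comp] at hf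
  exact ⟨hf.injective.of_comp_right hq, hf.surjective.of_comp⟩

variable {R M : Type*} [Ring R] [AddCommGroup M] [Module R M]

theorem isInternal_comp_equiv {ι ι' : Type*} [DecidableEq ι] [DecidableEq ι']
    {N : ι → Submodule R M} (hN : DirectSum.IsInternal N) (ε : ι' ≃ ι) :
    DirectSum.IsInternal fun i => N (ε i) :=
  DirectSum.isInternal_submodule_of_iSupIndep_of_iSup_eq_top
    (hN.submodule_iSupIndep.comp ε.injective)
    (ε.iSup_comp.trans hN.submodule_iSup_eq_top)

theorem isInternal_map_sigma {ι : Type*} {κ T : ι → Type*} [DecidableEq ι]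
    [∀ i, DecidableEq (κ i)] [∀ i, AddCommGroup (T i)] [∀ i, Module R (T i)]
    {f : ∀ i, T i →ₗ[R] M} (hf : ∀ i, Function.Injective (f i))
    (hrange : DirectSum.IsInternal fun i => LinearMap.range (f i))
    {𝒯 : ∀ i, κ i → Submodule R (T i)} (h𝒯 : ∀ i, DirectSum.IsInternal (𝒯 i)) :
    DirectSum.IsInternal fun x : Σ i, κ i => (𝒯 x.1 x.2).map (f x.1) := by
  refine DirectSum.isInternal_submodule_of_iSupIndep_of_iSup_eq_top ?_ ?_
  · exact iSupIndep_sigma hrange.submodule_iSupIndep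
      (fun i => (f i).iSupIndep_map (hf i) (h𝒯 i).submodule_iSupIndep)
      fun i j => LinearMap.map_le_range
  · calc ⨆ x : Σ i, κ i, (𝒯 x.1 x.2).map (f x.1)
        = ⨆ i, (⨆ j, 𝒯 i j).map (f i) := by simp only [iSup_sigma, Submodule.map_iSup]
      _ = ⨆ i, LinearMap.range (f i) := by
        simp only [(h𝒯 _).submodule_iSup_eq_top, Submodule.map_top]
      _ = ⊤ := hrange.submodule_iSup_eq_top

end InternalDirectSums

section TensorGrading

theorem isInternal_range_piTensorProduct_map_subtype {R ι : Type*} [CommSemiring R] [Fintype ι]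
    {κ M : ι → Type*} [∀ i, DecidableEq (κ i)] [∀ i, AddCommMonoid (M i)] [∀ i, Module R (M i)]
    {ℳ : ∀ i, κ i → Submodule R (M i)} (hℳ : ∀ i, DirectSum.IsInternal (ℳ i)) :
    DirectSum.IsInternal fun p : ∀ i, κ i =>
      LinearMap.range (PiTensorProduct.map fun i => (ℳ i (p i)).subtype) := by
  let distrib := ofDirectSumEquiv.symm ≪≫ₗ PiTensorProduct.congr fun i =>
    LinearEquiv.ofBijective (DirectSum.coeLinearMap (ℳ i)) (hℳ i)
  have hdistrib : DirectSum.toModule R (∀ i, κ i) (⨂[R] i, M i)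
      (fun p => PiTensorProduct.map fun i => (ℳ i (p i)).subtype) = distrib.toLinearMap := by
    ext p m
    have hsummand : ∀ i, LinearEquiv.ofBijective (DirectSum.coeLinearMap (ℳ i)) (hℳ i)
        (DirectSum.lof R (κ i) (fun j => ℳ i j) (p i) (m i)) = m i :=
      fun i => DirectSum.coeLinearMap_lof (ℳ i) (p i) (m i)
    simp [distrib, hsummand]
  exact isInternal_range_of_bijective_toModule _ (by rw [hdistrib]; exact distrib.bijective)

variable {O : Type*} [CommRing O] {n : ℕ} {G : Fin n → Type*}

theorem tensorGrading_eq_range_map {M : Fin n → Type*} [∀ i, AddCommGroup (M i)]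
    [∀ i, Module O (M i)] (ℳ : ∀ i, G i → Submodule O (M i)) (g : ∀ i, G i) :
    tensorGrading O ℳ g = LinearMap.range (PiTensorProduct.map fun i => (ℳ i (g i)).subtype) := by
  rw [PiTensorProduct.map_range_eq_span_tprod, tensorGrading]
  congr 1
  ext x
  constructor
  · rintro ⟨m, hm, rfl⟩
    exact ⟨fun i => ⟨m i, hm i⟩, rfl⟩
  · rintro ⟨m, rfl⟩
    exact ⟨fun i => m i, fun i => (m i).2, rfl⟩

theorem isAlgebraGrading_tensorGrading [∀ i, Group (G i)] {A : Fin n → Type*} [∀ i, Ring (A i)]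
    [∀ i, Algebra O (A i)] {𝒜 : ∀ i, G i → Submodule O (A i)}
    (h𝒜 : ∀ i, IsAlgebraGrading O (𝒜 i)) : IsAlgebraGrading O (tensorGrading O 𝒜) := by
  refine ⟨Submodule.subset_span ⟨1, fun i => (h𝒜 i).1, rfl⟩, fun g h t ht u hu => ?_, ?_⟩
  · suffices hle : tensorGrading O 𝒜 g * tensorGrading O 𝒜 h ≤
        tensorGrading O 𝒜 (g * h) from hle (Submodule.mul_mem_mul ht hu)
    rw [tensorGrading, tensorGrading, Submodule.span_mul_span, Submodule.span_le]
    rintro _ ⟨_, ⟨a, ha, rfl⟩, _, ⟨b, hb, rfl⟩, rfl⟩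
    exact Submodule.subset_span
      ⟨a * b, fun i => (h𝒜 i).2.1 _ (ha i) _ (hb i), PiTensorProduct.tprod_mul_tprod a b⟩
  · classical
    rw [funext (tensorGrading_eq_range_map 𝒜)]
    convert! isInternal_range_piTensorProduct_map_subtype fun i => (h𝒜 i).2.2

theorem map_mem_tensorGrading_permMulAut {G M : Type*} [Group G] [AddCommGroup M] [Module O M]
    {ℳ : G → Submodule O M} {σ : Equiv.Perm (Fin n)}
    {f : (⨂[O] _i : Fin n, M) →ₗ[O] ⨂[O] _i : Fin n, M}
    (hf : ∀ m : Fin n → M, f (tprod O m) = tprod O fun i => m (σ.symm i))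
    {g : Fin n → G} {t : ⨂[O] _i : Fin n, M} (ht : t ∈ tensorGrading O (fun _ => ℳ) g) :
    f t ∈ tensorGrading O (fun _ => ℳ) (permMulAut G n σ g) := by
  suffices hle : tensorGrading O (fun _ => ℳ) g ≤
      (tensorGrading O (fun _ => ℳ) (permMulAut G n σ g)).comap f from hle ht
  refine Submodule.span_le.2 ?_
  rintro _ ⟨m, hm, rfl⟩
  exact Submodule.subset_span ⟨_, fun i => hm (σ.symm i), hf m⟩

end TensorGrading

section SkewGrading

variable {O N K T W : Type*} [CommRing O] [Group N] [Group K] [Ring T] [Algebra O T] [Ring W]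
  [Algebra O W] {φ : K →* MulAut N}

/-- The embedding `t ↦ t·k` of `T` as the `k`-th summand of a skew group algebra `W = ⊕ₖ T·k`,
where `T` and `K` are mapped to `W` by `e` and `s`. -/
def skewInclusion (e : T →ₐ[O] W) (s : K →* Wˣ) (k : K) : T →ₗ[O] W :=
  LinearMap.mulRight O (s k : W) ∘ₗ e.toLinearMap

/-- The grading of a skew group algebra `⊕ₖ T·k` by `N ⋊ K` induced by an `N`-grading `𝒯` of `T`:
the `(g, k)`-component is `T_g·k`. -/
def skewGrading (𝒯 : N → Submodule O T) (e : T →ₐ[O] W) (s : K →* Wˣ) (x : N ⋊[φ] K) :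
    Submodule O W :=
  (𝒯 x.left).map (skewInclusion e s x.right)

theorem skewInclusion_injective {e : T →ₐ[O] W} (he : Function.Injective e) (s : K →* Wˣ) (k : K) :
    Function.Injective (skewInclusion e s k) :=
  (s k).isUnit.mul_left_injective.comp he

theorem range_skewInclusion (e : T →ₐ[O] W) (s : K →* Wˣ) (k : K) :
    LinearMap.range (skewInclusion e s k) =
      (Subalgebra.toSubmodule e.range).map (LinearMap.mulRight O (s k : W)) :=
  LinearMap.range_comp _ _

theorem skewInclusion_mul_skewInclusion {e : T →ₐ[O] W} {s : K →* Wˣ} {k : K} {u u' : T}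
    (hcomm : (s k : W) * e u = e u' * s k) (t : T) (l : K) :
    skewInclusion e s k t * skewInclusion e s l u = skewInclusion e s (k * l) (t * u') :=
  calc e t * s k * (e u * s l)
      = e t * (s k * e u) * s l := by simp only [mul_assoc]
    _ = e t * (e u' * s k) * s l := by rw [hcomm]
    _ = e (t * u') * (s (k * l) : Wˣ) := by simp only [map_mul, Units.val_mul, mul_assoc]

theorem isInternal_skewGrading [DecidableEq N] [DecidableEq K] [DecidableEq (N ⋊[φ] K)]
    {𝒯 : N → Submodule O T} (h𝒯 : DirectSum.IsInternal 𝒯) {e : T →ₐ[O] W} {s : K →* Wˣ}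
    (he : Function.Injective e)
    (hrange : DirectSum.IsInternal fun k => LinearMap.range (skewInclusion e s k)) :
    DirectSum.IsInternal (skewGrading (φ := φ) 𝒯 e s) :=
  let ε : N ⋊[φ] K ≃ Σ _ : K, N :=
    SemidirectProduct.equivProd.trans ((Equiv.prodComm N K).trans (Equiv.sigmaEquivProd K N).symm)
  isInternal_comp_equiv
    (isInternal_map_sigma (skewInclusion_injective he s) hrange fun _ => h𝒯) ε

theorem isAlgebraGrading_skewGrading {𝒯 : N → Submodule O T} (h𝒯 : IsAlgebraGrading O 𝒯)
    {e : T →ₐ[O] W} {s : K →* Wˣ} (he : Function.Injective e)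
    (hrange : letI := Classical.decEq K
      DirectSum.IsInternal fun k => LinearMap.range (skewInclusion e s k))
    {Φ : K → T → T} (hcomm : ∀ k t, (s k : W) * e t = e (Φ k t) * s k)
    (hΦ : ∀ k g, ∀ t ∈ 𝒯 g, Φ k t ∈ 𝒯 (φ k g)) :
    IsAlgebraGrading O (skewGrading (φ := φ) 𝒯 e s) := by
  obtain ⟨hone, hmul, hinternal⟩ := h𝒯
  refine ⟨⟨1, hone, by simp [skewInclusion]⟩, ?_, ?_⟩
  · rintro x y _ ⟨t, ht, rfl⟩ _ ⟨u, hu, rfl⟩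
    rw [skewInclusion_mul_skewInclusion (hcomm x.right u)]
    exact Submodule.mem_map_of_mem (hmul _ ht _ (hΦ _ _ u hu))
  · let := Classical.decEq K
    let := Classical.decEq N
    let := Classical.decEq (N ⋊[φ] K)
    exact isInternal_skewGrading hinternal he hrange

end SkewGrading

theorem stmt6 (O : Type*) [CommRing O] (G : Type*) [Group G] (n : ℕ) (hn : 1 ≤ n)
    (A : Type*) [Ring A] [Algebra O A]
    (𝒜 : G → Submodule O A) (h𝒜 : IsAlgebraGrading O 𝒜)
    -- the permutation action of `Sₙ` on `A^{⊗n}`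
    (Φ : Equiv.Perm (Fin n) →* ((⨂[O] _i : Fin n, A) ≃ₐ[O] (⨂[O] _i : Fin n, A)))
    (hΦ : ∀ (σ : Equiv.Perm (Fin n)) (a : Fin n → A),
      Φ σ (tprod O a) = tprod O (fun i => a (σ.symm i)))
    -- the wreath product algebra `W = A ≀ Sₙ`
    (W : Type*) [Ring W] [Algebra O W]
    (e : (⨂[O] _i : Fin n, A) →ₐ[O] W) (s : Equiv.Perm (Fin n) →* Wˣ)
    (hW : IsWreathPresentation O e s Φ) :
    IsAlgebraGrading O (wreathGrading O 𝒜 e s) := by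
  obtain ⟨he, hinternal, hcomm⟩ := hW
  simp only [← range_skewInclusion] at hinternal
  change IsAlgebraGrading O (skewGrading (tensorGrading O fun _ => 𝒜) e s)
  exact isAlgebraGrading_skewGrading (isAlgebraGrading_tensorGrading fun _ => h𝒜) he hinternal hcomm
    fun σ _ _ ht => map_mem_tensorGrading_permMulAut (f := (Φ σ).toLinearMap) (hΦ σ) ht
end

section
/- Let O be a commutative ring, G a group, n ≥ 1, C a G-graded G-acted O-algebra, and A a G-graded crossed product which is a G-graded algebra over C with structure map ζ : C → C_A(B), B = A₁. Then A≀Sₙ is a (G≀Sₙ)-graded algebra over C^{⊗n}, with structure map ζ_wr : C^{⊗n} → C_{A≀Sₙ}((A≀Sₙ)_1) given by ζ_wr(c₁ ⊗ … ⊗ cₙ) := (ζ(c₁) ⊗ … ⊗ ζ(cₙ)) ⊗ e. That is: the identity component of A≀Sₙ is B^{⊗n} ⊗ e; ζ_wr is an O-algebra homomorphism into the centralizer of B^{⊗n} ⊗ e in A≀Sₙ; ζ_wr maps (C^{⊗n})_{(g₁,…,gₙ)} into the ((g₁,…,gₙ),e)-component of A≀Sₙ; and ζ_wr(^{x}c)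 = ^{x}ζ_wr(c) for all x ∈ G≀Sₙ and c ∈ C^{⊗n}, where G≀Sₙ acts on the centralizer by conjugation with invertible homogeneous elements of A≀Sₙ and acts on C^{⊗n} by ^{((g₁,…,gₙ),σ)}(c₁ ⊗ … ⊗ cₙ) = (^{g₁}c_{σ⁻¹(1)}) ⊗ … ⊗ (^{gₙ}c_{σ⁻¹(n)}). -/
open scoped TensorProduct
open PiTensorProduct MulOpposite

/-- `𝒜` is a `G`-graded crossed product structure on the `O`-algebra `A`. -/
def IsCrossedProduct (O : Type*) [CommRing O] {G : Type*} [Group G] {A : Type*}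
    [Ring A] [Algebra O A] (𝒜 : G → Submodule O A) : Prop :=
  IsAlgebraGrading O 𝒜 ∧ ∀ g : G, ∃ u : Aˣ, (u : A) ∈ 𝒜 g

/-- `(𝒞, φ)` is a `G`-graded `G`-acted structure on the `O`-algebra `C`. -/
def IsGradedActedAlgebra (O : Type*) [CommRing O] {G : Type*} [Group G] {C : Type*}
    [Ring C] [Algebra O C] (𝒞 : G → Submodule O C) (φ : G →* (C ≃ₐ[O] C)) : Prop :=
  IsAlgebraGrading O 𝒞 ∧ ∀ (g h : G), ∀ c ∈ 𝒞 h, φ g c ∈ 𝒞 (g * h * g⁻¹)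

/-- `ζ` makes the `G`-graded algebra `(A, 𝒜)` a graded algebra over `(C, 𝒞, φ)`. -/
def IsGradedAlgebraOver (O : Type*) [CommRing O] {G : Type*} [Group G]
    {A C : Type*} [Ring A] [Algebra O A] [Ring C] [Algebra O C]
    (𝒜 : G → Submodule O A) (𝒞 : G → Submodule O C) (φ : G →* (C ≃ₐ[O] C))
    (ζ : C →ₐ[O] A) : Prop :=
  (∀ (c : C), ∀ b ∈ 𝒜 1, ζ c * b = b * ζ c) ∧
  (∀ g : G, ∀ c ∈ 𝒞 g, ζ c ∈ 𝒜 g) ∧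
  (∀ (g : G) (u : Aˣ), (u : A) ∈ 𝒜 g → ∀ c : C, ζ (φ g c) = ↑u * ζ c * ↑u⁻¹)

/-!
For homogeneous `a ∈ A_g`, the relation `a ζ(c) = ζ(^g c) a` combines the centralizer condition
(`g = 1`) with equivariance (`a` invertible). It holds in a crossed product because `a = (a u) u⁻¹`
with `u` a unit of degree `g⁻¹`, so that `a u ∈ A₁`. Unlike conjugation by units, it is linear in
`a` and passes factor by factor to tensor products; composing with `s(σ) e(t) = e(^σ t) s(σ)` then
gives it for the homogeneous elements `e(t) s(σ)` of the wreath product.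
-/

section PiTensorMap

variable {O ι : Type*} [CommSemiring O] {A C : ι → Type*} [∀ i, Semiring (A i)]
  [∀ i, Algebra O (A i)] [∀ i, Semiring (C i)] [∀ i, Algebra O (C i)]

/-- The algebra homomorphism `⨂ᵢ ζᵢ`, whose underlying linear map is `PiTensorProduct.map`. -/
noncomputable def piTensorMap (ζ : ∀ i, C i →ₐ[O] A i) : (⨂[O] i, C i) →ₐ[O] ⨂[O] i, A i :=
  liftAlgHom ((PiTensorProduct.tprod O).compLinearMap fun i => (ζ i).toLinearMap)
    (by simp [one_def, Pi.one_def]) (fun x y => by simp [Pi.mul_def])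

@[simp]
theorem piTensorMap_tprod (ζ : ∀ i, C i →ₐ[O] A i) (c : ∀ i, C i) :
    piTensorMap ζ (tprod O c) = tprod O fun i => ζ i (c i) :=
  lift.tprod c

end PiTensorMap

theorem piTensorMap_perm {O ι A C : Type*} [CommSemiring O] [Semiring A] [Algebra O A]
    [Semiring C] [Algebra O C] (ζ : C →ₐ[O] A) (σ : Equiv.Perm ι)
    {F : (⨂[O] _i : ι, A) →ₗ[O] ⨂[O] _i : ι, A}
    (hF : ∀ a : ι → A, F (tprod O a) = tprod O fun i => a (σ.symm i))
    {E : (⨂[O] _i : ι, C) →ₗ[O] ⨂[O] _i : ι, C}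
    (hE : ∀ c : ι → C, E (tprod O c) = tprod O fun i => c (σ.symm i)) (t : ⨂[O] _i : ι, C) :
    piTensorMap (fun _ => ζ) (E t) = F (piTensorMap (fun _ => ζ) t) := by
  have h : (piTensorMap fun _ : ι => ζ).toLinearMap ∘ₗ E =
      F ∘ₗ (piTensorMap fun _ : ι => ζ).toLinearMap := by
    ext c
    simp [hE, hF]
  exact LinearMap.congr_fun h t

theorem piTensorMap_mem_tensorGrading {O : Type*} [CommRing O] {n : ℕ} {G A C : Fin n → Type*}
    [∀ i, Ring (A i)] [∀ i, Algebra O (A i)] [∀ i, Ring (C i)] [∀ i, Algebra O (C i)]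
    {𝒜 : ∀ i, G i → Submodule O (A i)} {𝒞 : ∀ i, G i → Submodule O (C i)}
    {ζ : ∀ i, C i →ₐ[O] A i} (hζ : ∀ i g, ∀ c ∈ 𝒞 i g, ζ i c ∈ 𝒜 i g)
    {g : ∀ i, G i} {t : ⨂[O] i, C i} (ht : t ∈ tensorGrading O 𝒞 g) :
    piTensorMap ζ t ∈ tensorGrading O 𝒜 g := by
  suffices tensorGrading O 𝒞 g ≤ (tensorGrading O 𝒜 g).comap (piTensorMap ζ).toLinearMap from
    this ht
  refine Submodule.span_le.2 ?_
  rintro _ ⟨c, hc, rfl⟩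
  exact Submodule.subset_span
    ⟨fun i => ζ i (c i), fun i => hζ i _ _ (hc i), piTensorMap_tprod ζ c⟩

/-- `ζ : C → A` turns the `G`-action on `C` into conjugation: `a ζ(c) = ζ(^g c) a` for every `a` of
degree `g`. For crossed products this expresses both that `ζ` is centralized by `A₁` and that it is
`G`-equivariant, without mentioning invertible elements. -/
def GradedSemiconj {O G A C : Type*} [CommSemiring O] [Monoid G] [Semiring A] [Algebra O A]
    [Semiring C] [Algebra O C] (𝒜 : G → Submodule O A) (φ : G →* (C ≃ₐ[O] C))
    (ζ : C →ₐ[O] A) : Prop :=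
  ∀ ⦃g : G⦄ ⦃a : A⦄, a ∈ 𝒜 g → ∀ c : C, SemiconjBy a (ζ c) (ζ (φ g c))

namespace GradedSemiconj

section Monoid

variable {O G A C : Type*} [CommSemiring O] [Monoid G] [Semiring A] [Algebra O A] [Semiring C]
  [Algebra O C] {𝒜 : G → Submodule O A} {φ : G →* (C ≃ₐ[O] C)} {ζ : C →ₐ[O] A}

theorem commute (h : GradedSemiconj 𝒜 φ ζ) (c : C) {b : A} (hb : b ∈ 𝒜 1) :
    Commute (ζ c) b := by
  have hbc : SemiconjBy b (ζ c) (ζ (φ 1 c)) := h hb c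
  rw [map_one, AlgEquiv.one_apply] at hbc
  exact hbc.symm

theorem map_eq_conj (h : GradedSemiconj 𝒜 φ ζ) {g : G} {u : Aˣ} (hu : (u : A) ∈ 𝒜 g) (c : C) :
    ζ (φ g c) = u * ζ c * ↑u⁻¹ :=
  u.eq_mul_inv_iff_mul_eq.2 (h hu c).eq.symm

end Monoid

theorem piTensor {O : Type*} [CommRing O] {n : ℕ} {G A C : Fin n → Type*}
    [∀ i, Monoid (G i)] [∀ i, Ring (A i)] [∀ i, Algebra O (A i)] [∀ i, Ring (C i)]
    [∀ i, Algebra O (C i)] {𝒜 : ∀ i, G i → Submodule O (A i)} {φ : ∀ i, G i →* (C i ≃ₐ[O] C i)}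
    {ζ : ∀ i, C i →ₐ[O] A i} (h : ∀ i, GradedSemiconj (𝒜 i) (φ i) (ζ i))
    {Ψ : (∀ i, G i) →* ((⨂[O] i, C i) ≃ₐ[O] ⨂[O] i, C i)}
    (hΨ : ∀ g c, Ψ g (tprod O c) = tprod O fun i => φ i (g i) (c i)) :
    GradedSemiconj (tensorGrading O 𝒜) Ψ (piTensorMap ζ) := by
  intro g t ht c
  change t ∈ Submodule.span O _ at ht
  induction ht using Submodule.span_induction with
  | zero => exact SemiconjBy.zero_left _ _
  | add a b _ _ ha hb => exact ha.add_left hb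
  | smul r a _ ha => exact ha.smul_left r
  | mem t ht =>
    obtain ⟨a, ha, rfl⟩ := ht
    induction c using PiTensorProduct.induction_on with
    | add x y hx hy => simpa only [map_add] using hx.add_right hy
    | smul_tprod r c =>
      simp only [map_smul, hΨ, piTensorMap_tprod]
      exact (SemiconjBy.tprod <| Pi.semiconjBy_iff.2 fun i => h i (ha i) (c i)).smul_right r

end GradedSemiconj

theorem IsGradedAlgebraOver.gradedSemiconj {O G A C : Type*} [CommRing O] [Group G] [Ring A]
    [Algebra O A] [Ring C] [Algebra O C] {𝒜 : G → Submodule O A} {𝒞 : G → Submodule O C}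
    {φ : G →* (C ≃ₐ[O] C)} {ζ : C →ₐ[O] A} (hζ : IsGradedAlgebraOver O 𝒜 𝒞 φ ζ)
    (h𝒜 : IsCrossedProduct O 𝒜) : GradedSemiconj 𝒜 φ ζ := by
  intro g a ha c
  obtain ⟨hcentral, -, hconj⟩ := hζ
  obtain ⟨u, hu⟩ := h𝒜.2 g⁻¹
  have hau : a * u ∈ 𝒜 1 := mul_inv_cancel g ▸ h𝒜.1.2.1 a ha u hu
  have hau_comm : SemiconjBy (a * u) (ζ (φ g c)) (ζ (φ g c)) := (hcentral (φ g c) _ hau).symm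
  have hu_conj : SemiconjBy (u : A) (ζ (φ g c)) (ζ c) := by
    have hζc : ζ c = u * ζ (φ g c) * ↑u⁻¹ := by simpa using hconj g⁻¹ u hu (φ g c)
    exact hζc ▸ u.mk_semiconjBy _
  simpa using hau_comm.mul_left hu_conj.units_inv_symm_left

section Wreath

variable {O G A C W : Type*} [CommRing O] [Group G] {n : ℕ} [Ring A] [Algebra O A] [Ring C]
  [Algebra O C] [Ring W] [Algebra O W] {𝒜 : G → Submodule O A}
  {e : (⨂[O] _i : Fin n, A) →ₐ[O] W} {s : Equiv.Perm (Fin n) →* Wˣ}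

theorem wreathGrading_mk_one (g : Fin n → G) :
    wreathGrading O 𝒜 e s ⟨g, 1⟩ =
      (tensorGrading O (fun _ : Fin n => 𝒜) g).map e.toLinearMap := by
  have h : LinearMap.mulRight O ((s 1 : Wˣ) : W) = LinearMap.id := by simp
  simp only [wreathGrading, h, LinearMap.id_comp]

theorem GradedSemiconj.wreath {φ : G →* (C ≃ₐ[O] C)} {ζ : C →ₐ[O] A} (hζ : GradedSemiconj 𝒜 φ ζ)
    {Φ : Equiv.Perm (Fin n) →* ((⨂[O] _i : Fin n, A) ≃ₐ[O] ⨂[O] _i : Fin n, A)}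
    (hΦ : ∀ (σ : Equiv.Perm (Fin n)) (a : Fin n → A),
      Φ σ (tprod O a) = tprod O fun i => a (σ.symm i))
    (hs : ∀ σ t, SemiconjBy (s σ : W) (e t) (e (Φ σ t)))
    {Ψ : WreathGroup G n →* ((⨂[O] _i : Fin n, C) ≃ₐ[O] ⨂[O] _i : Fin n, C)}
    (hΨ : ∀ (x : WreathGroup G n) (c : Fin n → C),
      Ψ x (tprod O c) = tprod O fun i => φ (x.left i) (c (x.right.symm i))) :
    GradedSemiconj (wreathGrading O 𝒜 e s) Ψ (e.comp (piTensorMap fun _ => ζ)) := by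
  rintro x _ ⟨t, ht, rfl⟩ c
  set Z := piTensorMap fun _ : Fin n => ζ
  have hperm : Z (Ψ (.inr x.right) c) = Φ x.right (Z c) :=
    piTensorMap_perm ζ x.right (F := (Φ x.right).toLinearMap) (hΦ x.right)
      (E := (Ψ (.inr x.right)).toLinearMap) (fun c => by simp [hΨ]) c
  have hbase : GradedSemiconj (tensorGrading O fun _ => 𝒜) (Ψ.comp SemidirectProduct.inl) Z :=
    .piTensor (fun _ => hζ) fun g c => hΨ (.inl g) c
  have hright : SemiconjBy (s x.right : W) (e (Z c)) (e (Z (Ψ (.inr x.right) c))) :=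
    hperm ▸ hs x.right (Z c)
  have hleft : SemiconjBy (e t) (e (Z (Ψ (.inr x.right) c))) (e (Z (Ψ x c))) := by
    have hx : Ψ x c = Ψ (.inl x.left) (Ψ (.inr x.right) c) := by
      rw [← AlgEquiv.mul_apply, ← map_mul, SemidirectProduct.inl_left_mul_inr_right]
    exact hx ▸ (hbase ht (Ψ (.inr x.right) c)).map e
  exact hleft.mul_left hright

end Wreath

theorem stmt9_general {O G A C W : Type*} [CommRing O] [Group G] {n : ℕ} [Ring A] [Algebra O A]
    [Ring C] [Algebra O C] [Ring W] [Algebra O W] {𝒜 : G → Submodule O A}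
    {𝒞 : G → Submodule O C} {φ : G →* (C ≃ₐ[O] C)} {ζ : C →ₐ[O] A} (hζ : GradedSemiconj 𝒜 φ ζ)
    (hζ_deg : ∀ g, ∀ c ∈ 𝒞 g, ζ c ∈ 𝒜 g)
    {Φ : Equiv.Perm (Fin n) →* ((⨂[O] _i : Fin n, A) ≃ₐ[O] ⨂[O] _i : Fin n, A)}
    (hΦ : ∀ (σ : Equiv.Perm (Fin n)) (a : Fin n → A),
      Φ σ (tprod O a) = tprod O fun i => a (σ.symm i))
    {e : (⨂[O] _i : Fin n, A) →ₐ[O] W} {s : Equiv.Perm (Fin n) →* Wˣ}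
    (hs : ∀ σ t, SemiconjBy (s σ : W) (e t) (e (Φ σ t)))
    {Ψ : WreathGroup G n →* ((⨂[O] _i : Fin n, C) ≃ₐ[O] ⨂[O] _i : Fin n, C)}
    (hΨ : ∀ (x : WreathGroup G n) (c : Fin n → C),
      Ψ x (tprod O c) = tprod O fun i => φ (x.left i) (c (x.right.symm i))) :
    wreathGrading O 𝒜 e s 1 =
      (tensorGrading O (fun _ : Fin n => 𝒜) 1).map e.toLinearMap ∧
    ∃ Zwr : (⨂[O] _i : Fin n, C) →ₐ[O] W,
      (∀ c : Fin n → C, Zwr (tprod O c) = e (tprod O fun i => ζ (c i))) ∧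
      (∀ g : Fin n → G, ∀ c ∈ tensorGrading O (fun _ : Fin n => 𝒞) g,
        Zwr c ∈ wreathGrading O 𝒜 e s ⟨g, 1⟩) ∧
      GradedSemiconj (wreathGrading O 𝒜 e s) Ψ Zwr := by
  refine ⟨wreathGrading_mk_one 1, e.comp (piTensorMap fun _ => ζ), fun c => ?_, fun g c hc => ?_,
    hζ.wreath hΦ hs hΨ⟩
  · rw [AlgHom.comp_apply, piTensorMap_tprod]
  · rw [wreathGrading_mk_one]
    exact Submodule.mem_map_of_mem (piTensorMap_mem_tensorGrading (fun _ => hζ_deg) hc)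

theorem stmt9 (O : Type*) [CommRing O] (G : Type*) [Group G] (n : ℕ) (hn : 1 ≤ n)
    (C : Type*) [Ring C] [Algebra O C]
    (𝒞 : G → Submodule O C) (φ : G →* (C ≃ₐ[O] C))
    (h𝒞 : IsGradedActedAlgebra O 𝒞 φ)
    (A : Type*) [Ring A] [Algebra O A]
    (𝒜 : G → Submodule O A) (h𝒜 : IsCrossedProduct O 𝒜)
    (ζ : C →ₐ[O] A) (hζ : IsGradedAlgebraOver O 𝒜 𝒞 φ ζ)
    -- the permutation action of `Sₙ` on `A^{⊗n}`
    (Φ : Equiv.Perm (Fin n) →* ((⨂[O] _i : Fin n, A) ≃ₐ[O] (⨂[O] _i : Fin n, A)))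
    (hΦ : ∀ (σ : Equiv.Perm (Fin n)) (a : Fin n → A),
      Φ σ (tprod O a) = tprod O (fun i => a (σ.symm i)))
    -- the wreath product algebra `W = A ≀ Sₙ`
    (W : Type*) [Ring W] [Algebra O W]
    (e : (⨂[O] _i : Fin n, A) →ₐ[O] W) (s : Equiv.Perm (Fin n) →* Wˣ)
    (hW : IsWreathPresentation O e s Φ)
    -- the action of `G ≀ Sₙ` on `C^{⊗n}`
    (Ψ : WreathGroup G n →* ((⨂[O] _i : Fin n, C) ≃ₐ[O] (⨂[O] _i : Fin n, C)))
    (hΨ : ∀ (x : WreathGroup G n) (c : Fin n → C),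
      Ψ x (tprod O c) = tprod O (fun i => φ (x.left i) (c (x.right.symm i)))) :
    -- the identity component of `A ≀ Sₙ` is `B^{⊗n} ⊗ e`
    wreathGrading O 𝒜 e s (1 : WreathGroup G n) =
      Submodule.map e.toLinearMap (tensorGrading O (fun _ : Fin n => 𝒜) (1 : Fin n → G)) ∧
    ∃ Zwr : (⨂[O] _i : Fin n, C) →ₐ[O] W,
      -- `ζ_wr(c₁ ⊗ … ⊗ cₙ) = (ζ(c₁) ⊗ … ⊗ ζ(cₙ)) ⊗ e`
      (∀ c : Fin n → C, Zwr (tprod O c) = e (tprod O (fun i => ζ (c i)))) ∧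
      -- `ζ_wr` takes values in the centralizer of the identity component of `A ≀ Sₙ`
      (∀ t : (⨂[O] _i : Fin n, C), ∀ b ∈ wreathGrading O 𝒜 e s (1 : WreathGroup G n),
        Zwr t * b = b * Zwr t) ∧
      -- `ζ_wr` maps `(C^{⊗n})_{(g₁,…,gₙ)}` into the `((g₁,…,gₙ),e)`-component
      (∀ g : Fin n → G, ∀ c ∈ tensorGrading O (fun _ : Fin n => 𝒞) g,
        Zwr c ∈ wreathGrading O 𝒜 e s ⟨g, 1⟩) ∧
      -- `ζ_wr` is `G ≀ Sₙ`-equivariant, where `G ≀ Sₙ` acts on the centralizer by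
      -- conjugation with invertible homogeneous elements of `A ≀ Sₙ`
      (∀ (x : WreathGroup G n) (v : Wˣ), (v : W) ∈ wreathGrading O 𝒜 e s x →
        ∀ c : (⨂[O] _i : Fin n, C), Zwr (Ψ x c) = ↑v * Zwr c * ↑v⁻¹) := by
  obtain ⟨hone, Zwr, hZ, hdeg, hconj⟩ :=
    stmt9_general (hζ.gradedSemiconj h𝒜) hζ.2.1 hΦ hW.2.2 hΨ
  exact ⟨hone, Zwr, hZ, fun t _ hb => hconj.commute t hb, hdeg,
    fun _ _ hv c => hconj.map_eq_conj hv c⟩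
end

section
/- Let O be a commutative ring, G a group, n ≥ 1, C a G-graded G-acted O-algebra, and let A, A' be G-graded crossed products over C. If M̃ is a G-graded (A,A')-bimodule over C, then the wreath product M̃≀Sₙ := M̃^{⊗n} ⊗ OSₙ is a (G≀Sₙ)-graded (A≀Sₙ, A'≀Sₙ)-bimodule over C^{⊗n}: its ((g₁,…,gₙ),σ)-component is (M̃_{g₁} ⊗ … ⊗ M̃_{gₙ}) ⊗ Oσ, one has (A≀Sₙ)_x (M̃≀Sₙ)_y (A'≀Sₙ)_z ⊆ (M̃≀Sₙ)_{xyz} for all x, y, z ∈ G≀Sₙ, the identity component of M̃≀Sₙ is M^{⊗n} where M := M̃_1, and for every homogeneous element m of degree x = ((g₁,…,gₙ),σ) and every c ∈ C^{⊗n} one has m c = (^{x}c) m. -/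
open scoped TensorProduct
open PiTensorProduct MulOpposite

/-- An `(A, A')`-bimodule structure on the `O`-module `M`, encoded by a pair of
`O`-algebra maps `l : A →ₐ[O] Module.End O M` (the left action) and
`r : A'ᵐᵒᵖ →ₐ[O] Module.End O M` (the right action) whose images commute. -/
def IsBimodule (O : Type*) [CommRing O] {A A' M : Type*} [Ring A] [Algebra O A]
    [Ring A'] [Algebra O A'] [AddCommGroup M] [Module O M]
    (l : A →ₐ[O] Module.End O M) (r : A'ᵐᵒᵖ →ₐ[O] Module.End O M) : Prop :=
  ∀ (a : A) (a' : A'ᵐᵒᵖ) (m : M), l a (r a' m) = r a' (l a m)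

/-- `(M, ℳ, l, r)` is a `G`-graded `(A, A')`-bimodule over `C`. -/
def IsGradedBimoduleOver (O : Type*) [CommRing O] {G : Type*} [Group G]
    {A A' C M : Type*} [Ring A] [Algebra O A] [Ring A'] [Algebra O A']
    [Ring C] [Algebra O C] [AddCommGroup M] [Module O M]
    (𝒜 : G → Submodule O A) (𝒜' : G → Submodule O A')
    (φ : G →* (C ≃ₐ[O] C)) (ζ : C →ₐ[O] A) (ζ' : C →ₐ[O] A')
    (ℳ : G → Submodule O M)
    (l : A →ₐ[O] Module.End O M) (r : A'ᵐᵒᵖ →ₐ[O] Module.End O M) : Prop :=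
  IsBimodule O l r ∧
  (letI := Classical.decEq G; DirectSum.IsInternal ℳ) ∧
  (∀ (g x h : G), ∀ a ∈ 𝒜 g, ∀ m ∈ ℳ x, ∀ a' ∈ 𝒜' h,
      l a (r (op a') m) ∈ ℳ (g * x * h)) ∧
  (∀ (g : G) (c : C), ∀ m ∈ ℳ g, r (op (ζ' c)) m = l (ζ (φ g c)) m)

/-- The wreath product module `M ≀ Sₙ := M^{⊗n} ⊗ OSₙ`. -/
abbrev WreathModule (O : Type*) [CommRing O] (n : ℕ) (M : Type*)
    [AddCommGroup M] [Module O M] : Type _ :=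
  (⨂[O] _i : Fin n, M) ⊗[O] MonoidAlgebra O (Equiv.Perm (Fin n))

/-- The embedding `M^{⊗n} → M ≀ Sₙ`, `x ↦ x ⊗ σ`. -/
noncomputable def wreathModuleEmb (O : Type*) [CommRing O] {n : ℕ} (M : Type*)
    [AddCommGroup M] [Module O M] (σ : Equiv.Perm (Fin n)) :
    (⨂[O] _i : Fin n, M) →ₗ[O] WreathModule O n M :=
  (TensorProduct.mk O (⨂[O] _i : Fin n, M) (MonoidAlgebra O (Equiv.Perm (Fin n)))).flip
    (MonoidAlgebra.single σ 1)

/-- The `((g₁,…,gₙ),σ)`-component `(M_{g₁} ⊗ … ⊗ M_{gₙ}) ⊗ Oσ` of `M ≀ Sₙ`. -/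
noncomputable def wreathModuleGrading (O : Type*) [CommRing O] {G : Type*} [Group G] {n : ℕ}
    {M : Type*} [AddCommGroup M] [Module O M] (ℳ : G → Submodule O M)
    (x : WreathGroup G n) : Submodule O (WreathModule O n M) :=
  Submodule.map (wreathModuleEmb O M x.right) (tensorGrading O (fun _ : Fin n => ℳ) x.left)

/-!
All bimodule conditions for `M^{⊗n}` are multilinear, so they need only be checked on pure
tensors of homogeneous elements, where they hold factor by factor: `M^{⊗n}` is a `Gⁿ`-graded
bimodule over `C^{⊗n}`. Since the actions of `A^{⊗n}` and `A'^{⊗n}` on it are equivariant under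
permuting the factors, the commutation relation `s(σ) e(t) = e(^σt) s(σ)` holds for the
corresponding operators on `M^{⊗n} ⊗ OSₙ`, and the universal property of `T ≀ Sₙ` produces both
actions. Degrees multiply as in `G ≀ Sₙ` because a permutation of the factors also permutes the
degrees. Moving `c ∈ C^{⊗n}` from right to left past `x ⊗ σ`, with `x` of degree `g ∈ Gⁿ`, first
permutes `c` by `σ` and then applies the action of `g`; in total `c` is acted on by `(g, σ)`.
-/

section Projections

variable {O ι N : Type*} [CommRing O] [AddCommGroup N] [Module O N]

/-- `P` is a family of projections onto the members of the family `p` of submodules: `P i` is the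
identity on `p i` and vanishes on every other `p j`. Nothing is required outside `⨆ i, p i`. -/
structure IsProjectionFamily (p : ι → Submodule O N) (P : ι → N →ₗ[O] N) : Prop where
  apply_of_mem : ∀ ⦃i x⦄, x ∈ p i → P i x = x
  apply_of_mem_of_ne : ∀ ⦃i j x⦄, j ≠ i → x ∈ p j → P i x = 0

variable {p : ι → Submodule O N} {P : ι → N →ₗ[O] N}

theorem IsProjectionFamily.iSupIndep (hP : IsProjectionFamily p P) : iSupIndep p := by
  refine iSupIndep_def.2 fun i => Submodule.disjoint_def.2 fun x hx hx' => ?_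
  have hker : ⨆ j, ⨆ (_ : j ≠ i), p j ≤ LinearMap.ker (P i) :=
    iSup₂_le fun j hj x hx => hP.apply_of_mem_of_ne hj hx
  rw [← hP.apply_of_mem hx]
  exact hker hx'

theorem exists_isProjectionFamily (hind : iSupIndep p) (htop : ⨆ i, p i = ⊤) :
    ∃ P : ι → N →ₗ[O] N, IsProjectionFamily p P := by
  have hcompl (i : ι) : IsCompl (p i) (⨆ j, ⨆ (_ : j ≠ i), p j) :=
    ⟨hind i, codisjoint_iff.2 ((iSup_split_single p i).symm.trans htop)⟩
  refine ⟨fun i => (p i).projection _ (hcompl i), ⟨fun i x hx => ?_, fun i j x hj hx => ?_⟩⟩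
  · exact Submodule.projection_apply_of_mem_left (hcompl i) hx
  · exact (Submodule.projection_apply_eq_zero_iff (hcompl i)).2 (Submodule.mem_iSup_of_mem j
      (Submodule.mem_iSup_of_mem hj hx))

end Projections

section TensorGrading

variable {O : Type*} [CommRing O] {n : ℕ} {G M : Fin n → Type*}
  [∀ i, AddCommGroup (M i)] [∀ i, Module O (M i)] {ℳ : ∀ i, G i → Submodule O (M i)} {g : ∀ i, G i}

theorem tprod_mem_tensorGrading {m : ∀ i, M i} (hm : ∀ i, m i ∈ ℳ i (g i)) :
    tprod O m ∈ tensorGrading O ℳ g :=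
  Submodule.subset_span ⟨m, hm, rfl⟩

theorem tensorGrading_le {q : Submodule O (⨂[O] i, M i)}
    (h : ∀ m : ∀ i, M i, (∀ i, m i ∈ ℳ i (g i)) → tprod O m ∈ q) : tensorGrading O ℳ g ≤ q :=
  Submodule.span_le.2 fun _ ⟨m, hm, hx⟩ => hx ▸ h m hm

theorem eqOn_tensorGrading {N : Type*} [AddCommGroup N] [Module O N] {f f' : (⨂[O] i, M i) →ₗ[O] N}
    (h : ∀ m : ∀ i, M i, (∀ i, m i ∈ ℳ i (g i)) → f (tprod O m) = f' (tprod O m)) :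
    Set.EqOn f f' (tensorGrading O ℳ g) :=
  tensorGrading_le (q := LinearMap.eqLocus f f') h

theorem iSup_tensorGrading (h : ∀ i, ⨆ j, ℳ i j = ⊤) : ⨆ g, tensorGrading O ℳ g = ⊤ := by
  classical
  rw [eq_top_iff, ← PiTensorProduct.span_tprod_eq_top, Submodule.span_le]
  rintro _ ⟨m, rfl⟩
  have hm (i : Fin n) : ∃ f : G i →₀ M i, (∀ j, f j ∈ ℳ i j) ∧ (f.sum fun _ x => x) = m i :=
    (Submodule.mem_iSup_iff_exists_finsupp _ _).1 (h i ▸ Submodule.mem_top)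
  choose f hf hfm using hm
  rw [← funext hfm]
  simp only [Finsupp.sum]
  rw [MultilinearMap.map_sum_finset]
  exact Submodule.sum_mem _ fun g _ =>
    Submodule.mem_iSup_of_mem g (tprod_mem_tensorGrading fun i => hf i (g i))

theorem isProjectionFamily_tensorGrading {P : ∀ i, G i → M i →ₗ[O] M i}
    (hP : ∀ i, IsProjectionFamily (ℳ i) (P i)) :
    IsProjectionFamily (tensorGrading O ℳ) fun g => PiTensorProduct.map fun i => P i (g i) where
  apply_of_mem g x hx := eqOn_tensorGrading (f' := LinearMap.id) (fun m hm => by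
    simp only [PiTensorProduct.map_tprod, (hP _).apply_of_mem (hm _), LinearMap.id_apply]) hx
  apply_of_mem_of_ne g g' x hg hx := by
    obtain ⟨i, hi⟩ := Function.ne_iff.1 hg
    refine eqOn_tensorGrading (f' := 0) (fun m hm => ?_) hx
    rw [PiTensorProduct.map_tprod]
    exact MultilinearMap.map_coord_zero _ i ((hP i).apply_of_mem_of_ne hi (hm i))

theorem isInternal_tensorGrading [DecidableEq (∀ i, G i)]
    (h : ∀ i, letI := Classical.decEq (G i); DirectSum.IsInternal (ℳ i)) :
    DirectSum.IsInternal (tensorGrading O ℳ) := by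
  let (i : Fin n) := Classical.decEq (G i)
  choose P hP using fun i =>
    exists_isProjectionFamily (h i).submodule_iSupIndep (h i).submodule_iSup_eq_top
  exact DirectSum.isInternal_submodule_of_iSupIndep_of_iSup_eq_top
    (isProjectionFamily_tensorGrading hP).iSupIndep
    (iSup_tensorGrading fun i => (h i).submodule_iSup_eq_top)

end TensorGrading

section TensorBimodule

variable {O : Type*} [CommRing O] {n : ℕ} {G A A' C M : Fin n → Type*} [∀ i, Group (G i)]
  [∀ i, Ring (A i)] [∀ i, Algebra O (A i)] [∀ i, Ring (A' i)] [∀ i, Algebra O (A' i)]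
  [∀ i, Ring (C i)] [∀ i, Algebra O (C i)] [∀ i, AddCommGroup (M i)] [∀ i, Module O (M i)]
  {𝒜 : ∀ i, G i → Submodule O (A i)} {𝒜' : ∀ i, G i → Submodule O (A' i)}
  {ℳ : ∀ i, G i → Submodule O (M i)} {φ : ∀ i, G i →* (C i ≃ₐ[O] C i)}
  {ζ : ∀ i, C i →ₐ[O] A i} {ζ' : ∀ i, C i →ₐ[O] A' i}
  {l : ∀ i, A i →ₐ[O] Module.End O (M i)} {r : ∀ i, (A' i)ᵐᵒᵖ →ₐ[O] Module.End O (M i)}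
  {Lb : (⨂[O] i, A i) →ₐ[O] Module.End O (⨂[O] i, M i)}
  {Rb : (⨂[O] i, A' i)ᵐᵒᵖ →ₐ[O] Module.End O (⨂[O] i, M i)}
  (hLb : ∀ (a : ∀ i, A i) (m : ∀ i, M i),
    Lb (tprod O a) (tprod O m) = tprod O fun i => l i (a i) (m i))
  (hRb : ∀ (a' : ∀ i, A' i) (m : ∀ i, M i),
    Rb (op (tprod O a')) (tprod O m) = tprod O fun i => r i (op (a' i)) (m i))

include hLb hRb

theorem isBimodule_tensor (h : ∀ i, IsBimodule O (l i) (r i)) : IsBimodule O Lb Rb := by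
  have hcomm : (LinearMap.mul O _).compl₁₂ Lb.toLinearMap
        (Rb.toLinearMap ∘ₗ (opLinearEquiv O).toLinearMap) =
      (LinearMap.mul O _).flip.compl₁₂ Lb.toLinearMap
        (Rb.toLinearMap ∘ₗ (opLinearEquiv O).toLinearMap) := by
    ext a a' m
    simp [hLb, hRb, h _ _ _ _]
  exact fun t t' x => congr($hcomm t (unop t') x)

theorem left_right_mem_tensorGrading
    (h : ∀ i, ∀ g x k : G i, ∀ a ∈ 𝒜 i g, ∀ m ∈ ℳ i x, ∀ a' ∈ 𝒜' i k,
      l i a (r i (op a') m) ∈ ℳ i (g * x * k))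
    {g x k : ∀ i, G i} {t : ⨂[O] i, A i} (ht : t ∈ tensorGrading O 𝒜 g)
    {y : ⨂[O] i, M i} (hy : y ∈ tensorGrading O ℳ x)
    {t' : ⨂[O] i, A' i} (ht' : t' ∈ tensorGrading O 𝒜' k) :
    Lb t (Rb (op t') y) ∈ tensorGrading O ℳ (g * x * k) := by
  let q := tensorGrading O ℳ (g * x * k)
  refine tensorGrading_le (q := q.comap (Lb.toLinearMap.flip (Rb (op t') y))) (fun a ha => ?_) ht
  refine tensorGrading_le (q := q.comap (Lb (tprod O a) ∘ₗ Rb (op t'))) (fun m hm => ?_) hy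
  refine tensorGrading_le (q := q.comap (Lb (tprod O a) ∘ₗ
    (Rb.toLinearMap ∘ₗ (opLinearEquiv O).toLinearMap).flip (tprod O m))) (fun a' ha' => ?_) ht'
  change Lb (tprod O a) (Rb (op (tprod O a')) (tprod O m)) ∈ q
  rw [hRb, hLb]
  exact tprod_mem_tensorGrading fun i => h i _ _ _ _ (ha i) _ (hm i) _ (ha' i)

theorem isGradedBimoduleOver_tensorGrading
    (hM : ∀ i, IsGradedBimoduleOver O (𝒜 i) (𝒜' i) (φ i) (ζ i) (ζ' i) (ℳ i) (l i) (r i))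
    {φn : (∀ i, G i) →* ((⨂[O] i, C i) ≃ₐ[O] ⨂[O] i, C i)}
    (hφn : ∀ g c, φn g (tprod O c) = tprod O fun i => φ i (g i) (c i))
    {Z : (⨂[O] i, C i) →ₐ[O] ⨂[O] i, A i} (hZ : ∀ c, Z (tprod O c) = tprod O fun i => ζ i (c i))
    {Z' : (⨂[O] i, C i) →ₐ[O] ⨂[O] i, A' i}
    (hZ' : ∀ c, Z' (tprod O c) = tprod O fun i => ζ' i (c i)) :
    IsGradedBimoduleOver O (tensorGrading O 𝒜) (tensorGrading O 𝒜') φn Z Z'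
      (tensorGrading O ℳ) Lb Rb := by
  let := Classical.decEq (∀ i, G i)
  refine ⟨isBimodule_tensor hLb hRb fun i => (hM i).1,
    isInternal_tensorGrading fun i => (hM i).2.1, fun g x k t ht y hy t' ht' =>
      left_right_mem_tensorGrading hLb hRb (fun i => (hM i).2.2.1) ht hy ht',
    fun g c x hx => ?_⟩
  refine eqOn_tensorGrading (fun m hm => ?_) hx
  have hmaps : (Rb.toLinearMap ∘ₗ (opLinearEquiv O).toLinearMap ∘ₗ Z'.toLinearMap).flip (tprod O m)
      = (Lb.toLinearMap ∘ₗ Z.toLinearMap ∘ₗ (φn g).toLinearMap).flip (tprod O m) := by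
    ext c
    simp [hRb, hLb, hZ, hZ', hφn, (hM _).2.2.2 _ _ _ (hm _)]
  exact congr($hmaps c)

end TensorBimodule

section Permutation

variable {O : Type*} [CommRing O] {n : ℕ} {A M N : Type*} [AddCommGroup A] [Module O A]
  [AddCommGroup M] [Module O M] [AddCommGroup N] [Module O N] {σ : Equiv.Perm (Fin n)}
  {fA : (⨂[O] _i : Fin n, A) →ₗ[O] ⨂[O] _i : Fin n, A}
  {fM : (⨂[O] _i : Fin n, M) →ₗ[O] ⨂[O] _i : Fin n, M}
  {fN : (⨂[O] _i : Fin n, N) →ₗ[O] ⨂[O] _i : Fin n, N}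

theorem perm_tensorMap₂
    {B : (⨂[O] _i : Fin n, A) →ₗ[O] (⨂[O] _i : Fin n, M) →ₗ[O] ⨂[O] _i : Fin n, N}
    {b : A → M → N} (hB : ∀ a m, B (tprod O a) (tprod O m) = tprod O fun i => b (a i) (m i))
    (hfA : ∀ a, fA (tprod O a) = tprod O fun i => a (σ.symm i))
    (hfM : ∀ m, fM (tprod O m) = tprod O fun i => m (σ.symm i))
    (hfN : ∀ m, fN (tprod O m) = tprod O fun i => m (σ.symm i)) (t x) :
    fN (B t x) = B (fA t) (fM x) := by
  have hmaps : B.compr₂ fN = B.compl₁₂ fA fM := by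
    ext a m
    simp [hB, hfA, hfM, hfN]
  exact congr($hmaps t x)

theorem perm_mem_tensorGrading {G : Type*} [Group G] {ℳ : G → Submodule O M}
    (hfM : ∀ m, fM (tprod O m) = tprod O fun i => m (σ.symm i)) {g : Fin n → G} {x}
    (hx : x ∈ tensorGrading O (fun _ : Fin n => ℳ) g) :
    fM x ∈ tensorGrading O (fun _ : Fin n => ℳ) (permMulAut G n σ g) := by
  refine tensorGrading_le (q := (tensorGrading O _ (permMulAut G n σ g)).comap fM)
    (fun m hm => ?_) hx
  rw [Submodule.mem_comap, hfM]
  exact tprod_mem_tensorGrading fun i => hm (σ.symm i)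

end Permutation

section WreathPresentation

variable {O : Type*} [CommRing O] {n : ℕ} {T W E : Type*} [Ring T] [Algebra O T]
  [Ring W] [Algebra O W] [Ring E] [Algebra O E]

/-- The linear map `(t_σ)_σ ↦ ∑ σ, f(t_σ) p(σ)`. For a wreath product presented by `(e, s)`, the
pair `(f, p) = (e, s)` yields coordinates on `T ≀ Sₙ`. -/
def wreathSum (f : T →ₐ[O] E) (p : Equiv.Perm (Fin n) → E) :
    (Equiv.Perm (Fin n) → T) →ₗ[O] E :=
  LinearMap.lsum O (fun _ => T) O fun σ => LinearMap.mulRight O (p σ) ∘ₗ f.toLinearMap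

@[simp]
theorem wreathSum_single (f : T →ₐ[O] E) (p : Equiv.Perm (Fin n) → E) (σ : Equiv.Perm (Fin n))
    (t : T) : wreathSum f p (Pi.single σ t) = f t * p σ :=
  LinearMap.lsum_piSingle ..

theorem wreathSum_apply (f : T →ₐ[O] E) (p : Equiv.Perm (Fin n) → E) (v : Equiv.Perm (Fin n) → T) :
    wreathSum f p v = ∑ σ, f (v σ) * p σ := by
  simp [wreathSum, LinearMap.lsum_apply]

namespace IsWreathPresentation

variable {e : T →ₐ[O] W} {s : Equiv.Perm (Fin n) →* Wˣ}
  {Φ : Equiv.Perm (Fin n) →* (T ≃ₐ[O] T)}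

theorem wreathSum_bijective (hW : IsWreathPresentation O e s Φ) :
    Function.Bijective (wreathSum e fun σ => (s σ : W)) := by
  obtain ⟨he, hint, -⟩ := hW
  have hind := @DirectSum.IsInternal.submodule_iSupIndep _ _ _ (Classical.decEq _) _ _ _ _ hint
  have htop := @DirectSum.IsInternal.submodule_iSup_eq_top _ _ _ (Classical.decEq _) _ _ _ _ hint
  constructor
  · refine (injective_iff_map_eq_zero _).2 fun v hv => funext fun σ => he ?_
    rw [wreathSum_apply] at hv
    have hσ : e (v σ) * s σ = 0 :=
      (iSupIndep_iff_finsetSum_eq_zero_imp_eq_zero _).1 hind Finset.univ _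
        (fun σ _ => ⟨e (v σ), ⟨v σ, rfl⟩, rfl⟩) hv σ (Finset.mem_univ σ)
    rw [(s σ).mul_left_eq_zero.1 hσ, Pi.zero_apply, map_zero]
  · rw [← LinearMap.range_eq_top, eq_top_iff, ← htop]
    refine iSup_le ?_
    rintro σ _ ⟨_, ⟨t, rfl⟩, rfl⟩
    exact ⟨Pi.single σ t, wreathSum_single e (fun σ => (s σ : W)) σ t⟩

theorem induction_on (hW : IsWreathPresentation O e s Φ) {motive : W → Prop} (w : W)
    (mul : ∀ t σ, motive (e t * s σ)) (add : ∀ x y, motive x → motive y → motive (x + y)) :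
    motive w := by
  obtain ⟨v, rfl⟩ := hW.wreathSum_bijective.2 w
  rw [wreathSum_apply]
  exact Finset.sum_induction _ motive add (by simpa using mul 0 1) fun σ _ => mul (v σ) σ

/-- The linear form of the universal property of `T ≀ Sₙ`: the linear extension of
`e(t) s(σ) ↦ f(t) p(σ)`. -/
noncomputable def linearLift (hW : IsWreathPresentation O e s Φ) (f : T →ₐ[O] E)
    (p : Equiv.Perm (Fin n) → E) : W →ₗ[O] E :=
  wreathSum f p ∘ₗ (LinearEquiv.ofBijective _ hW.wreathSum_bijective).symm.toLinearMap

@[simp]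
theorem linearLift_mul (hW : IsWreathPresentation O e s Φ) (f : T →ₐ[O] E)
    (p : Equiv.Perm (Fin n) → E) (t : T) (σ : Equiv.Perm (Fin n)) :
    hW.linearLift f p (e t * s σ) = f t * p σ := by
  have hsymm : (LinearEquiv.ofBijective _ hW.wreathSum_bijective).symm (e t * s σ) =
      Pi.single σ t :=
    (LinearEquiv.symm_apply_eq _).2 (wreathSum_single e (fun σ => (s σ : W)) σ t).symm
  rw [linearLift, LinearMap.comp_apply, LinearEquiv.coe_coe, hsymm, wreathSum_single]

theorem mul_mul_mul (hW : IsWreathPresentation O e s Φ) (t u : T) (σ τ : Equiv.Perm (Fin n)) :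
    e t * s σ * (e u * s τ) = e (t * Φ σ u) * s (σ * τ) := by
  rw [map_mul, map_mul, Units.val_mul, mul_assoc, ← mul_assoc (s σ : W), hW.2.2]
  simp only [mul_assoc]

/-- The universal property of `T ≀ Sₙ`: an algebra map `f` on `T` and a multiplicative map `p` on
`Sₙ` satisfying `p(σ) f(t) = f(^σ t) p(σ)` extend to an algebra map on `T ≀ Sₙ`. -/
noncomputable def lift (hW : IsWreathPresentation O e s Φ) (f : T →ₐ[O] E)
    (p : Equiv.Perm (Fin n) →* E) (h : ∀ σ t, p σ * f t = f (Φ σ t) * p σ) : W →ₐ[O] E :=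
  AlgHom.ofLinearMap (hW.linearLift f p)
    (by simpa using hW.linearLift_mul f p 1 1)
    (fun x y => by
      induction x using hW.induction_on with
      | add x x' hx hx' => rw [add_mul, map_add, hx, hx', map_add, add_mul]
      | mul t σ =>
        induction y using hW.induction_on with
        | add y y' hy hy' => rw [mul_add, map_add, hy, hy', map_add, mul_add]
        | mul u τ =>
          rw [hW.mul_mul_mul, linearLift_mul, linearLift_mul, linearLift_mul, map_mul, map_mul,
            mul_assoc (f t), ← mul_assoc (f (Φ σ u)), ← h]
          simp only [mul_assoc])

variable (hW : IsWreathPresentation O e s Φ) (f : T →ₐ[O] E) (p : Equiv.Perm (Fin n) →* E)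
  (h : ∀ σ t, p σ * f t = f (Φ σ t) * p σ)

@[simp]
theorem lift_base (t : T) : hW.lift f p h (e t) = f t := by
  change hW.linearLift f p (e t) = f t
  simpa using hW.linearLift_mul f p t 1

@[simp]
theorem lift_perm (σ : Equiv.Perm (Fin n)) : hW.lift f p h (s σ) = p σ := by
  change hW.linearLift f p (s σ) = p σ
  simpa using hW.linearLift_mul f p 1 σ

end IsWreathPresentation

end WreathPresentation

section WreathModule

variable {O : Type*} [CommRing O] {n : ℕ} {M N : Type*} [AddCommGroup M] [Module O M]
  [AddCommGroup N] [Module O N]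

variable (O n M) in
/-- Coordinates on `M ≀ Sₙ`: the identification of `M^{⊗n} ⊗ OSₙ` with the direct sum of copies of
`M^{⊗n}` indexed by `Sₙ`. -/
noncomputable def wreathModuleEquivFinsupp :
    WreathModule O n M ≃ₗ[O] Equiv.Perm (Fin n) →₀ ⨂[O] _i : Fin n, M :=
  TensorProduct.congr (.refl O _) (MonoidAlgebra.coeffLinearEquiv O) ≪≫ₗ
    TensorProduct.finsuppScalarRight O O _ _

@[simp]
theorem wreathModuleEquivFinsupp_emb (σ : Equiv.Perm (Fin n)) (x : ⨂[O] _i : Fin n, M) :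
    wreathModuleEquivFinsupp O n M (wreathModuleEmb O M σ x) = Finsupp.single σ x := by
  simp [wreathModuleEquivFinsupp, wreathModuleEmb, TensorProduct.finsuppScalarRight_apply_tmul]

theorem wreathModuleEquivFinsupp_symm_single (σ : Equiv.Perm (Fin n)) (x : ⨂[O] _i : Fin n, M) :
    (wreathModuleEquivFinsupp O n M).symm (Finsupp.single σ x) = wreathModuleEmb O M σ x := by
  rw [LinearEquiv.symm_apply_eq, wreathModuleEquivFinsupp_emb]

theorem wreathModule_induction_on {motive : WreathModule O n M → Prop} (z : WreathModule O n M)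
    (emb : ∀ σ x, motive (wreathModuleEmb O M σ x))
    (add : ∀ x y, motive x → motive y → motive (x + y)) : motive z := by
  obtain ⟨v, rfl⟩ := (wreathModuleEquivFinsupp O n M).symm.surjective z
  induction v using Finsupp.induction_linear with
  | zero => simpa using emb 1 0
  | add v w hv hw => rw [map_add]; exact add _ _ hv hw
  | single σ x => rw [wreathModuleEquivFinsupp_symm_single]; exact emb σ x

theorem wreathModule_hom_ext {f g : WreathModule O n M →ₗ[O] N}
    (h : ∀ σ x, f (wreathModuleEmb O M σ x) = g (wreathModuleEmb O M σ x)) : f = g := by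
  refine LinearMap.ext fun z => ?_
  induction z using wreathModule_induction_on with
  | emb σ x => exact h σ x
  | add x y hx hy => rw [map_add, map_add, hx, hy]

/-- The linear map out of `M ≀ Sₙ` given by `f σ` on the summand `M^{⊗n} ⊗ Oσ`. -/
noncomputable def wreathModuleLift (f : Equiv.Perm (Fin n) → (⨂[O] _i : Fin n, M) →ₗ[O] N) :
    WreathModule O n M →ₗ[O] N :=
  Finsupp.lsum O f ∘ₗ (wreathModuleEquivFinsupp O n M).toLinearMap

@[simp]
theorem wreathModuleLift_emb (f : Equiv.Perm (Fin n) → (⨂[O] _i : Fin n, M) →ₗ[O] N)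
    (σ : Equiv.Perm (Fin n)) (x : ⨂[O] _i : Fin n, M) :
    wreathModuleLift f (wreathModuleEmb O M σ x) = f σ x := by
  simp [wreathModuleLift]

variable {G : Type*} [Group G] {ℳ : G → Submodule O M}

theorem isProjectionFamily_wreathModuleGrading
    {P : (Fin n → G) → (⨂[O] _i : Fin n, M) →ₗ[O] ⨂[O] _i : Fin n, M}
    (hP : IsProjectionFamily (tensorGrading O fun _ : Fin n => ℳ) P) :
    IsProjectionFamily (wreathModuleGrading (n := n) O ℳ) fun y => wreathModuleLift fun τ =>
      if τ = y.right then wreathModuleEmb O M τ ∘ₗ P y.left else 0 where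
  apply_of_mem y := by
    rintro _ ⟨x, hx, rfl⟩
    rw [wreathModuleLift_emb, if_pos rfl, LinearMap.comp_apply, hP.apply_of_mem hx]
  apply_of_mem_of_ne y y' := by
    rintro _ hne ⟨x, hx, rfl⟩
    rw [wreathModuleLift_emb]
    split_ifs with hright
    · have hleft : y'.left ≠ y.left := fun hleft => hne (SemidirectProduct.ext hleft hright)
      rw [LinearMap.comp_apply, hP.apply_of_mem_of_ne hleft hx, map_zero]
    · rfl

theorem iSup_wreathModuleGrading (h : ⨆ g, tensorGrading O (fun _ : Fin n => ℳ) g = ⊤) :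
    ⨆ y, wreathModuleGrading (n := n) O ℳ y = ⊤ := by
  rw [eq_top_iff]
  rintro z -
  induction z using wreathModule_induction_on with
  | add x y hx hy => exact Submodule.add_mem _ hx hy
  | emb σ x =>
    have hle : ⨆ g, tensorGrading O (fun _ : Fin n => ℳ) g ≤
        (⨆ y, wreathModuleGrading (n := n) O ℳ y).comap (wreathModuleEmb O M σ) :=
      iSup_le fun g x hx => Submodule.mem_iSup_of_mem (⟨g, σ⟩ : WreathGroup G n) ⟨x, hx, rfl⟩
    exact hle (h ▸ Submodule.mem_top)

theorem isInternal_wreathModuleGrading [DecidableEq (Fin n → G)] [DecidableEq (WreathGroup G n)]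
    (h : DirectSum.IsInternal (tensorGrading O fun _ : Fin n => ℳ)) :
    DirectSum.IsInternal (wreathModuleGrading (n := n) O ℳ) := by
  obtain ⟨P, hP⟩ := exists_isProjectionFamily h.submodule_iSupIndep h.submodule_iSup_eq_top
  exact DirectSum.isInternal_submodule_of_iSupIndep_of_iSup_eq_top
    (isProjectionFamily_wreathModuleGrading hP).iSupIndep
    (iSup_wreathModuleGrading h.submodule_iSup_eq_top)

end WreathModule

section WreathAction

variable {O : Type*} [CommRing O] {n : ℕ} {M T T' W W' : Type*} [AddCommGroup M] [Module O M]
  [Ring T] [Algebra O T] [Ring T'] [Algebra O T'] [Ring W] [Algebra O W] [Ring W'] [Algebra O W']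

/-- The action of `T` on `M ≀ Sₙ` that preserves each summand `M^{⊗n} ⊗ Oσ` and is given there by
`ρ σ`. -/
noncomputable def wreathModuleDiag
    (ρ : Equiv.Perm (Fin n) → T →ₐ[O] Module.End O (⨂[O] _i : Fin n, M)) :
    T →ₐ[O] Module.End O (WreathModule O n M) :=
  AlgHom.ofLinearMap
    { toFun t := wreathModuleLift fun τ => wreathModuleEmb O M τ ∘ₗ ρ τ t
      map_add' _ _ := wreathModule_hom_ext fun _ _ => by simp
      map_smul' _ _ := wreathModule_hom_ext fun _ _ => by simp }
    (wreathModule_hom_ext fun _ _ => by simp)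
    (fun _ _ => wreathModule_hom_ext fun _ _ => by simp)

@[simp]
theorem wreathModuleDiag_emb
    (ρ : Equiv.Perm (Fin n) → T →ₐ[O] Module.End O (⨂[O] _i : Fin n, M)) (t : T)
    (τ : Equiv.Perm (Fin n)) (x : ⨂[O] _i : Fin n, M) :
    wreathModuleDiag ρ t (wreathModuleEmb O M τ x) = wreathModuleEmb O M τ (ρ τ t x) :=
  wreathModuleLift_emb ..

/-- The left action of `Sₙ` on `M ≀ Sₙ`, `σ (x ⊗ τ) = ^σx ⊗ στ`. -/
noncomputable def wreathLeftTranslation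
    (ΦM : Equiv.Perm (Fin n) →* ((⨂[O] _i : Fin n, M) ≃ₗ[O] ⨂[O] _i : Fin n, M)) :
    Equiv.Perm (Fin n) →* Module.End O (WreathModule O n M) where
  toFun σ := wreathModuleLift fun τ => wreathModuleEmb O M (σ * τ) ∘ₗ (ΦM σ).toLinearMap
  map_one' := wreathModule_hom_ext fun _ _ => by simp
  map_mul' _ _ := wreathModule_hom_ext fun _ _ => by simp [mul_assoc]

@[simp]
theorem wreathLeftTranslation_emb
    (ΦM : Equiv.Perm (Fin n) →* ((⨂[O] _i : Fin n, M) ≃ₗ[O] ⨂[O] _i : Fin n, M))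
    (σ τ : Equiv.Perm (Fin n)) (x : ⨂[O] _i : Fin n, M) :
    wreathLeftTranslation ΦM σ (wreathModuleEmb O M τ x) = wreathModuleEmb O M (σ * τ) (ΦM σ x) :=
  wreathModuleLift_emb ..

variable (O n M) in
/-- The right action of `Sₙ` on `M ≀ Sₙ`, `(x ⊗ τ) π = x ⊗ τπ`. -/
noncomputable def wreathRightTranslation :
    Equiv.Perm (Fin n) →* (Module.End O (WreathModule O n M))ᵐᵒᵖ where
  toFun π := op (wreathModuleLift fun τ => wreathModuleEmb O M (τ * π))
  map_one' := unop_injective (wreathModule_hom_ext fun _ _ => by simp)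
  map_mul' _ _ := unop_injective (wreathModule_hom_ext fun _ _ => by simp [mul_assoc])

@[simp]
theorem wreathRightTranslation_emb (π τ : Equiv.Perm (Fin n)) (x : ⨂[O] _i : Fin n, M) :
    unop (wreathRightTranslation O n M π) (wreathModuleEmb O M τ x) =
      wreathModuleEmb O M (τ * π) x :=
  wreathModuleLift_emb ..

variable {Φ : Equiv.Perm (Fin n) →* (T ≃ₐ[O] T)} {Φ' : Equiv.Perm (Fin n) →* (T' ≃ₐ[O] T')}
  {ΦM : Equiv.Perm (Fin n) →* ((⨂[O] _i : Fin n, M) ≃ₗ[O] ⨂[O] _i : Fin n, M)}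
  {e : T →ₐ[O] W} {s : Equiv.Perm (Fin n) →* Wˣ}
  {e' : T' →ₐ[O] W'} {s' : Equiv.Perm (Fin n) →* W'ˣ}
  {Lb : T →ₐ[O] Module.End O (⨂[O] _i : Fin n, M)}
  {Rb : T'ᵐᵒᵖ →ₐ[O] Module.End O (⨂[O] _i : Fin n, M)}

/-- The left action of `T ≀ Sₙ` on `M ≀ Sₙ`, `(t ⊗ σ) (x ⊗ τ) = t · ^σx ⊗ στ`. -/
noncomputable def wreathLeftAction (hW : IsWreathPresentation O e s Φ)
    (hL : ∀ σ t x, ΦM σ (Lb t x) = Lb (Φ σ t) (ΦM σ x)) :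
    W →ₐ[O] Module.End O (WreathModule O n M) :=
  hW.lift (E := Module.End O (WreathModule O n M)) (wreathModuleDiag fun _ => Lb)
    (wreathLeftTranslation ΦM) fun σ t =>
      wreathModule_hom_ext fun τ x => by simp [hL]

variable (Rb) in
/-- The right action of `T' ≀ Sₙ` on `M ≀ Sₙ`, `(x ⊗ τ) (t' ⊗ π) = x · ^τt' ⊗ τπ`. -/
noncomputable def wreathRightAction (hW' : IsWreathPresentation O e' s' Φ') :
    W'ᵐᵒᵖ →ₐ[O] Module.End O (WreathModule O n M) :=
  AlgHom.opComm <| hW'.lift (E := (Module.End O (WreathModule O n M))ᵐᵒᵖ)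
    (AlgHom.opComm.symm (wreathModuleDiag fun τ => Rb.comp (AlgHom.op (Φ' τ).toAlgHom)))
    (wreathRightTranslation O n M) fun σ t =>
      unop_injective <| wreathModule_hom_ext fun τ x => by simp

section Left

variable (hW : IsWreathPresentation O e s Φ) (hL : ∀ σ t x, ΦM σ (Lb t x) = Lb (Φ σ t) (ΦM σ x))

@[simp]
theorem wreathLeftAction_base (t : T) (τ : Equiv.Perm (Fin n)) (x : ⨂[O] _i : Fin n, M) :
    wreathLeftAction hW hL (e t) (wreathModuleEmb O M τ x) = wreathModuleEmb O M τ (Lb t x) := by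
  simp [wreathLeftAction]

@[simp]
theorem wreathLeftAction_perm (σ τ : Equiv.Perm (Fin n)) (x : ⨂[O] _i : Fin n, M) :
    wreathLeftAction hW hL (s σ) (wreathModuleEmb O M τ x) =
      wreathModuleEmb O M (σ * τ) (ΦM σ x) := by
  simp [wreathLeftAction]

end Left

section Right

variable (Rb) (hW' : IsWreathPresentation O e' s' Φ')

@[simp]
theorem wreathRightAction_base (t' : T') (τ : Equiv.Perm (Fin n)) (x : ⨂[O] _i : Fin n, M) :
    wreathRightAction Rb hW' (op (e' t')) (wreathModuleEmb O M τ x) =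
      wreathModuleEmb O M τ (Rb (op (Φ' τ t')) x) := by
  simp [wreathRightAction]

@[simp]
theorem wreathRightAction_perm (π τ : Equiv.Perm (Fin n)) (x : ⨂[O] _i : Fin n, M) :
    wreathRightAction Rb hW' (op (s' π : W')) (wreathModuleEmb O M τ x) =
      wreathModuleEmb O M (τ * π) x := by
  simp [wreathRightAction]

end Right

theorem isBimodule_wreath (hW : IsWreathPresentation O e s Φ)
    (hW' : IsWreathPresentation O e' s' Φ') (hbim : IsBimodule O Lb Rb)
    (hL : ∀ σ t x, ΦM σ (Lb t x) = Lb (Φ σ t) (ΦM σ x))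
    (hR : ∀ σ t' x, ΦM σ (Rb (op t') x) = Rb (op (Φ' σ t')) (ΦM σ x)) :
    IsBimodule O (wreathLeftAction hW hL) (wreathRightAction Rb hW') := by
  intro w w' z
  obtain ⟨w', rfl⟩ := op_surjective w'
  induction w using hW.induction_on with
  | add v w hv hw => simp only [map_add, LinearMap.add_apply, hv, hw]
  | mul t σ =>
    induction w' using hW'.induction_on with
    | add v w hv hw => simp only [op_add, map_add, LinearMap.add_apply, hv, hw]
    | mul t' π =>
      induction z using wreathModule_induction_on with
      | add x y hx hy => rw [map_add, map_add, map_add, map_add, hx, hy]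
      | emb τ x => simp [hR, hbim _ _ _, mul_assoc]

end WreathAction

section WreathGraded

variable {O : Type*} [CommRing O] {G : Type*} [Group G] {n : ℕ} {A A' C M W W' : Type*}
  [Ring A] [Algebra O A] [Ring A'] [Algebra O A'] [Ring C] [Algebra O C]
  [AddCommGroup M] [Module O M] [Ring W] [Algebra O W] [Ring W'] [Algebra O W']
  {𝒜 : G → Submodule O A} {𝒜' : G → Submodule O A'} {ℳ : G → Submodule O M}
  {Φ : Equiv.Perm (Fin n) →* ((⨂[O] _i : Fin n, A) ≃ₐ[O] ⨂[O] _i : Fin n, A)}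
  {Φ' : Equiv.Perm (Fin n) →* ((⨂[O] _i : Fin n, A') ≃ₐ[O] ⨂[O] _i : Fin n, A')}
  {ΦM : Equiv.Perm (Fin n) →* ((⨂[O] _i : Fin n, M) ≃ₗ[O] ⨂[O] _i : Fin n, M)}
  {e : (⨂[O] _i : Fin n, A) →ₐ[O] W} {s : Equiv.Perm (Fin n) →* Wˣ}
  {e' : (⨂[O] _i : Fin n, A') →ₐ[O] W'} {s' : Equiv.Perm (Fin n) →* W'ˣ}
  {Lb : (⨂[O] _i : Fin n, A) →ₐ[O] Module.End O (⨂[O] _i : Fin n, M)}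
  {Rb : (⨂[O] _i : Fin n, A')ᵐᵒᵖ →ₐ[O] Module.End O (⨂[O] _i : Fin n, M)}
  (hW : IsWreathPresentation O e s Φ) (hW' : IsWreathPresentation O e' s' Φ')
  (hL : ∀ σ t x, ΦM σ (Lb t x) = Lb (Φ σ t) (ΦM σ x))

theorem left_right_mem_wreathModuleGrading
    (hΦ' : ∀ σ (a' : Fin n → A'), Φ' σ (tprod O a') = tprod O fun i => a' (σ.symm i))
    (hΦM : ∀ σ (m : Fin n → M), ΦM σ (tprod O m) = tprod O fun i => m (σ.symm i))
    (hR : ∀ σ t' x, ΦM σ (Rb (op t') x) = Rb (op (Φ' σ t')) (ΦM σ x))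
    (hgr : ∀ g x h : Fin n → G, ∀ t ∈ tensorGrading O (fun _ => 𝒜) g,
      ∀ y ∈ tensorGrading O (fun _ => ℳ) x, ∀ t' ∈ tensorGrading O (fun _ => 𝒜') h,
        Lb t (Rb (op t') y) ∈ tensorGrading O (fun _ => ℳ) (g * x * h))
    {g x h : WreathGroup G n} {w : W} (hw : w ∈ wreathGrading O 𝒜 e s g)
    {z : WreathModule O n M} (hz : z ∈ wreathModuleGrading O ℳ x)
    {w' : W'} (hw' : w' ∈ wreathGrading O 𝒜' e' s' h) :
    wreathLeftAction hW hL w (wreathRightAction Rb hW' (op w') z) ∈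
      wreathModuleGrading O ℳ (g * x * h) := by
  obtain ⟨t, ht, rfl⟩ := hw
  obtain ⟨y, hy, rfl⟩ := hz
  obtain ⟨t', ht', rfl⟩ := hw'
  have hcomp : Lb t (Rb (op (Φ' (g.right * x.right) t')) (ΦM g.right y)) ∈
      tensorGrading O (fun _ => ℳ) (g * x * h).left :=
    hgr _ _ _ t ht _ (perm_mem_tensorGrading (hΦM g.right) hy) _
      (perm_mem_tensorGrading (fM := (Φ' (g.right * x.right)).toLinearMap) (hΦ' _) ht')
  refine ⟨_, hcomp, ?_⟩
  simp [hR, mul_assoc]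

theorem right_structureMap_eq_left
    (hΦ' : ∀ σ (a' : Fin n → A'), Φ' σ (tprod O a') = tprod O fun i => a' (σ.symm i))
    {ζ' : C → A'} {Z : (⨂[O] _i : Fin n, C) →ₐ[O] ⨂[O] _i : Fin n, A}
    {Z' : (⨂[O] _i : Fin n, C) →ₐ[O] ⨂[O] _i : Fin n, A'}
    (hZ' : ∀ c, Z' (tprod O c) = tprod O fun i => ζ' (c i))
    {Ψ : WreathGroup G n →* ((⨂[O] _i : Fin n, C) ≃ₐ[O] ⨂[O] _i : Fin n, C)}
    (hΨ : ∀ σ (c : Fin n → C),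
      Ψ (SemidirectProduct.inr σ) (tprod O c) = tprod O fun i => c (σ.symm i))
    (hC : ∀ g c, ∀ y ∈ tensorGrading O (fun _ => ℳ) g,
      Rb (op (Z' c)) y = Lb (Z (Ψ (SemidirectProduct.inl g) c)) y)
    {x : WreathGroup G n} {z : WreathModule O n M} (hz : z ∈ wreathModuleGrading O ℳ x)
    (c : ⨂[O] _i : Fin n, C) :
    wreathRightAction Rb hW' (op (e' (Z' c))) z = wreathLeftAction hW hL (e (Z (Ψ x c))) z := by
  obtain ⟨y, hy, rfl⟩ := hz
  have hperm : (Φ' x.right).toLinearMap ∘ₗ Z'.toLinearMap =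
      Z'.toLinearMap ∘ₗ (Ψ (SemidirectProduct.inr x.right)).toLinearMap := by
    ext c
    simp [hΦ', hZ', hΨ]
  have hZc : Φ' x.right (Z' c) = Z' (Ψ (SemidirectProduct.inr x.right) c) := congr($hperm c)
  rw [wreathRightAction_base, wreathLeftAction_base, hZc, hC x.left _ y hy, ← AlgEquiv.mul_apply,
    ← map_mul, SemidirectProduct.inl_left_mul_inr_right]

theorem isGradedBimoduleOver_wreath
    (hΦ' : ∀ σ (a' : Fin n → A'), Φ' σ (tprod O a') = tprod O fun i => a' (σ.symm i))
    (hΦM : ∀ σ (m : Fin n → M), ΦM σ (tprod O m) = tprod O fun i => m (σ.symm i))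
    (hR : ∀ σ t' x, ΦM σ (Rb (op t') x) = Rb (op (Φ' σ t')) (ΦM σ x))
    {ζ' : C → A'} {Z : (⨂[O] _i : Fin n, C) →ₐ[O] ⨂[O] _i : Fin n, A}
    {Z' : (⨂[O] _i : Fin n, C) →ₐ[O] ⨂[O] _i : Fin n, A'}
    (hZ' : ∀ c, Z' (tprod O c) = tprod O fun i => ζ' (c i))
    {Ψ : WreathGroup G n →* ((⨂[O] _i : Fin n, C) ≃ₐ[O] ⨂[O] _i : Fin n, C)}
    (hΨ : ∀ σ (c : Fin n → C),
      Ψ (SemidirectProduct.inr σ) (tprod O c) = tprod O fun i => c (σ.symm i))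
    (hN : IsGradedBimoduleOver O (tensorGrading O fun _ => 𝒜) (tensorGrading O fun _ => 𝒜')
      (Ψ.comp SemidirectProduct.inl) Z Z' (tensorGrading O fun _ => ℳ) Lb Rb) :
    IsGradedBimoduleOver O (wreathGrading O 𝒜 e s) (wreathGrading O 𝒜' e' s') Ψ
      (e.comp Z) (e'.comp Z') (wreathModuleGrading O ℳ)
      (wreathLeftAction hW hL) (wreathRightAction Rb hW') := by
  let := Classical.decEq (Fin n → G)
  let := Classical.decEq (WreathGroup G n)
  obtain ⟨hbim, hint, hgr, hC⟩ := hN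
  exact ⟨isBimodule_wreath hW hW' hbim hL hR, isInternal_wreathModuleGrading hint,
    fun _ _ _ _ hw _ hz _ hw' =>
      left_right_mem_wreathModuleGrading hW hW' hL hΦ' hΦM hR hgr hw hz hw',
    fun _ c _ hz => right_structureMap_eq_left hW hW' hL hΦ' hZ' hΨ hC hz c⟩

end WreathGraded

theorem stmt10_general (O : Type*) [CommRing O] (G : Type*) [Group G] (n : ℕ)
    (C : Type*) [Ring C] [Algebra O C] (φ : G →* (C ≃ₐ[O] C))
    (A A' : Type*) [Ring A] [Algebra O A] [Ring A'] [Algebra O A']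
    (𝒜 : G → Submodule O A) (𝒜' : G → Submodule O A')
    (ζ : C →ₐ[O] A) (ζ' : C →ₐ[O] A')
    (M : Type*) [AddCommGroup M] [Module O M]
    (ℳ : G → Submodule O M)
    (l : A →ₐ[O] Module.End O M) (r : A'ᵐᵒᵖ →ₐ[O] Module.End O M)
    (hM : IsGradedBimoduleOver O 𝒜 𝒜' φ ζ ζ' ℳ l r)
    (Φ : Equiv.Perm (Fin n) →* ((⨂[O] _i : Fin n, A) ≃ₐ[O] (⨂[O] _i : Fin n, A)))
    (hΦ : ∀ (σ : Equiv.Perm (Fin n)) (a : Fin n → A),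
      Φ σ (tprod O a) = tprod O (fun i => a (σ.symm i)))
    (Φ' : Equiv.Perm (Fin n) →* ((⨂[O] _i : Fin n, A') ≃ₐ[O] (⨂[O] _i : Fin n, A')))
    (hΦ' : ∀ (σ : Equiv.Perm (Fin n)) (a' : Fin n → A'),
      Φ' σ (tprod O a') = tprod O (fun i => a' (σ.symm i)))
    (ΦM : Equiv.Perm (Fin n) →* ((⨂[O] _i : Fin n, M) ≃ₗ[O] (⨂[O] _i : Fin n, M)))
    (hΦM : ∀ (σ : Equiv.Perm (Fin n)) (m : Fin n → M),
      ΦM σ (tprod O m) = tprod O (fun i => m (σ.symm i)))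
    (W : Type*) [Ring W] [Algebra O W]
    (e : (⨂[O] _i : Fin n, A) →ₐ[O] W) (s : Equiv.Perm (Fin n) →* Wˣ)
    (hW : IsWreathPresentation O e s Φ)
    (W' : Type*) [Ring W'] [Algebra O W']
    (e' : (⨂[O] _i : Fin n, A') →ₐ[O] W') (s' : Equiv.Perm (Fin n) →* W'ˣ)
    (hW' : IsWreathPresentation O e' s' Φ')
    (Ψ : WreathGroup G n →* ((⨂[O] _i : Fin n, C) ≃ₐ[O] (⨂[O] _i : Fin n, C)))
    (hΨ : ∀ (x : WreathGroup G n) (c : Fin n → C),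
      Ψ x (tprod O c) = tprod O (fun i => φ (x.left i) (c (x.right.symm i))))
    (Z : (⨂[O] _i : Fin n, C) →ₐ[O] (⨂[O] _i : Fin n, A))
    (hZ : ∀ c : Fin n → C, Z (tprod O c) = tprod O (fun i => ζ (c i)))
    (Z' : (⨂[O] _i : Fin n, C) →ₐ[O] (⨂[O] _i : Fin n, A'))
    (hZ' : ∀ c : Fin n → C, Z' (tprod O c) = tprod O (fun i => ζ' (c i)))
    (Lb : (⨂[O] _i : Fin n, A) →ₐ[O] Module.End O (⨂[O] _i : Fin n, M))
    (hLb : ∀ (a : Fin n → A) (m : Fin n → M),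
      Lb (tprod O a) (tprod O m) = tprod O (fun i => l (a i) (m i)))
    (Rb : (⨂[O] _i : Fin n, A')ᵐᵒᵖ →ₐ[O] Module.End O (⨂[O] _i : Fin n, M))
    (hRb : ∀ (a' : Fin n → A') (m : Fin n → M),
      Rb (op (tprod O a')) (tprod O m) = tprod O (fun i => r (op (a' i)) (m i))) :
    ∃ (L : W →ₐ[O] Module.End O (WreathModule O n M))
      (R : W'ᵐᵒᵖ →ₐ[O] Module.End O (WreathModule O n M)),
      (∀ (t : ⨂[O] _i : Fin n, A) (τ : Equiv.Perm (Fin n)) (x : ⨂[O] _i : Fin n, M),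
        L (e t) (wreathModuleEmb O M τ x) = wreathModuleEmb O M τ (Lb t x)) ∧
      (∀ (σ τ : Equiv.Perm (Fin n)) (x : ⨂[O] _i : Fin n, M),
        L ((s σ : Wˣ) : W) (wreathModuleEmb O M τ x) =
          wreathModuleEmb O M (σ * τ) (ΦM σ x)) ∧
      (∀ (t' : ⨂[O] _i : Fin n, A') (τ : Equiv.Perm (Fin n)) (x : ⨂[O] _i : Fin n, M),
        R (op (e' t')) (wreathModuleEmb O M τ x) =
          wreathModuleEmb O M τ (Rb (op (Φ' τ t')) x)) ∧
      (∀ (π τ : Equiv.Perm (Fin n)) (x : ⨂[O] _i : Fin n, M),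
        R (op ((s' π : W'ˣ) : W')) (wreathModuleEmb O M τ x) =
          wreathModuleEmb O M (τ * π) x) ∧
      wreathModuleGrading O ℳ (1 : WreathGroup G n) =
        Submodule.map (wreathModuleEmb O M (1 : Equiv.Perm (Fin n)))
          (tensorGrading O (fun _ : Fin n => ℳ) (1 : Fin n → G)) ∧
      IsGradedBimoduleOver O (wreathGrading O 𝒜 e s) (wreathGrading O 𝒜' e' s') Ψ
        (e.comp Z) (e'.comp Z') (wreathModuleGrading O ℳ) L R := by
  have hL (σ t x) : ΦM σ (Lb t x) = Lb (Φ σ t) (ΦM σ x) :=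
    perm_tensorMap₂ (B := Lb.toLinearMap) (b := fun a => l a) (fA := (Φ σ).toLinearMap)
      (fM := (ΦM σ).toLinearMap) (fN := (ΦM σ).toLinearMap) hLb (hΦ σ) (hΦM σ) (hΦM σ) t x
  have hR (σ t' x) : ΦM σ (Rb (op t') x) = Rb (op (Φ' σ t')) (ΦM σ x) :=
    perm_tensorMap₂ (B := Rb.toLinearMap ∘ₗ (opLinearEquiv O).toLinearMap)
      (b := fun a' => r (op a')) (fA := (Φ' σ).toLinearMap) (fM := (ΦM σ).toLinearMap)
      (fN := (ΦM σ).toLinearMap) hRb (hΦ' σ) (hΦM σ) (hΦM σ) t' x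
  have hN : IsGradedBimoduleOver O (tensorGrading O fun _ => 𝒜) (tensorGrading O fun _ => 𝒜')
      (Ψ.comp SemidirectProduct.inl) Z Z' (tensorGrading O fun _ => ℳ) Lb Rb :=
    isGradedBimoduleOver_tensorGrading hLb hRb (fun _ => hM)
      (fun g c => hΨ (SemidirectProduct.inl g) c) hZ hZ'
  have hΨ_inr (σ c) : Ψ (SemidirectProduct.inr σ) (tprod O c) = tprod O fun i => c (σ.symm i) := by
    simp [hΨ]
  exact ⟨wreathLeftAction hW hL, wreathRightAction Rb hW', wreathLeftAction_base hW hL,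
    wreathLeftAction_perm hW hL, wreathRightAction_base Rb hW', wreathRightAction_perm Rb hW', rfl,
    isGradedBimoduleOver_wreath hW hW' hL hΦ' hΦM hR hZ' hΨ_inr hN⟩

theorem stmt10 (O : Type*) [CommRing O] (G : Type*) [Group G] (n : ℕ) (hn : 1 ≤ n)
    (C : Type*) [Ring C] [Algebra O C]
    (𝒞 : G → Submodule O C) (φ : G →* (C ≃ₐ[O] C))
    (h𝒞 : IsGradedActedAlgebra O 𝒞 φ)
    (A A' : Type*) [Ring A] [Algebra O A] [Ring A'] [Algebra O A']
    (𝒜 : G → Submodule O A) (𝒜' : G → Submodule O A')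
    (h𝒜 : IsCrossedProduct O 𝒜) (h𝒜' : IsCrossedProduct O 𝒜')
    (ζ : C →ₐ[O] A) (hζ : IsGradedAlgebraOver O 𝒜 𝒞 φ ζ)
    (ζ' : C →ₐ[O] A') (hζ' : IsGradedAlgebraOver O 𝒜' 𝒞 φ ζ')
    -- the `G`-graded `(A,A')`-bimodule `M̃` over `C`
    (M : Type*) [AddCommGroup M] [Module O M]
    (ℳ : G → Submodule O M)
    (l : A →ₐ[O] Module.End O M) (r : A'ᵐᵒᵖ →ₐ[O] Module.End O M)
    (hM : IsGradedBimoduleOver O 𝒜 𝒜' φ ζ ζ' ℳ l r)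
    -- the permutation actions of `Sₙ` on `A^{⊗n}`, `A'^{⊗n}` and `M̃^{⊗n}`
    (Φ : Equiv.Perm (Fin n) →* ((⨂[O] _i : Fin n, A) ≃ₐ[O] (⨂[O] _i : Fin n, A)))
    (hΦ : ∀ (σ : Equiv.Perm (Fin n)) (a : Fin n → A),
      Φ σ (tprod O a) = tprod O (fun i => a (σ.symm i)))
    (Φ' : Equiv.Perm (Fin n) →* ((⨂[O] _i : Fin n, A') ≃ₐ[O] (⨂[O] _i : Fin n, A')))
    (hΦ' : ∀ (σ : Equiv.Perm (Fin n)) (a' : Fin n → A'),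
      Φ' σ (tprod O a') = tprod O (fun i => a' (σ.symm i)))
    (ΦM : Equiv.Perm (Fin n) →* ((⨂[O] _i : Fin n, M) ≃ₗ[O] (⨂[O] _i : Fin n, M)))
    (hΦM : ∀ (σ : Equiv.Perm (Fin n)) (m : Fin n → M),
      ΦM σ (tprod O m) = tprod O (fun i => m (σ.symm i)))
    -- the wreath product algebras `W = A ≀ Sₙ` and `W' = A' ≀ Sₙ`
    (W : Type*) [Ring W] [Algebra O W]
    (e : (⨂[O] _i : Fin n, A) →ₐ[O] W) (s : Equiv.Perm (Fin n) →* Wˣ)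
    (hW : IsWreathPresentation O e s Φ)
    (W' : Type*) [Ring W'] [Algebra O W']
    (e' : (⨂[O] _i : Fin n, A') →ₐ[O] W') (s' : Equiv.Perm (Fin n) →* W'ˣ)
    (hW' : IsWreathPresentation O e' s' Φ')
    -- the action of `G ≀ Sₙ` on `C^{⊗n}`
    (Ψ : WreathGroup G n →* ((⨂[O] _i : Fin n, C) ≃ₐ[O] (⨂[O] _i : Fin n, C)))
    (hΨ : ∀ (x : WreathGroup G n) (c : Fin n → C),
      Ψ x (tprod O c) = tprod O (fun i => φ (x.left i) (c (x.right.symm i))))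
    -- the componentwise structure maps `C^{⊗n} → A^{⊗n}`, `C^{⊗n} → A'^{⊗n}`
    (Z : (⨂[O] _i : Fin n, C) →ₐ[O] (⨂[O] _i : Fin n, A))
    (hZ : ∀ c : Fin n → C, Z (tprod O c) = tprod O (fun i => ζ (c i)))
    (Z' : (⨂[O] _i : Fin n, C) →ₐ[O] (⨂[O] _i : Fin n, A'))
    (hZ' : ∀ c : Fin n → C, Z' (tprod O c) = tprod O (fun i => ζ' (c i)))
    -- the componentwise `(A^{⊗n}, A'^{⊗n})`-bimodule structure on `M̃^{⊗n}`
    (Lb : (⨂[O] _i : Fin n, A) →ₐ[O] Module.End O (⨂[O] _i : Fin n, M))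
    (hLb : ∀ (a : Fin n → A) (m : Fin n → M),
      Lb (tprod O a) (tprod O m) = tprod O (fun i => l (a i) (m i)))
    (Rb : (⨂[O] _i : Fin n, A')ᵐᵒᵖ →ₐ[O] Module.End O (⨂[O] _i : Fin n, M))
    (hRb : ∀ (a' : Fin n → A') (m : Fin n → M),
      Rb (op (tprod O a')) (tprod O m) = tprod O (fun i => r (op (a' i)) (m i))) :
    ∃ (L : W →ₐ[O] Module.End O (WreathModule O n M))
      (R : W'ᵐᵒᵖ →ₐ[O] Module.End O (WreathModule O n M)),
      -- the actions of `A ≀ Sₙ` and `A' ≀ Sₙ` on `M̃ ≀ Sₙ` are the twisted ones: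
      (∀ (t : ⨂[O] _i : Fin n, A) (τ : Equiv.Perm (Fin n)) (x : ⨂[O] _i : Fin n, M),
        L (e t) (wreathModuleEmb O M τ x) = wreathModuleEmb O M τ (Lb t x)) ∧
      (∀ (σ τ : Equiv.Perm (Fin n)) (x : ⨂[O] _i : Fin n, M),
        L ((s σ : Wˣ) : W) (wreathModuleEmb O M τ x) =
          wreathModuleEmb O M (σ * τ) (ΦM σ x)) ∧
      (∀ (t' : ⨂[O] _i : Fin n, A') (τ : Equiv.Perm (Fin n)) (x : ⨂[O] _i : Fin n, M),
        R (op (e' t')) (wreathModuleEmb O M τ x) =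
          wreathModuleEmb O M τ (Rb (op (Φ' τ t')) x)) ∧
      (∀ (π τ : Equiv.Perm (Fin n)) (x : ⨂[O] _i : Fin n, M),
        R (op ((s' π : W'ˣ) : W')) (wreathModuleEmb O M τ x) =
          wreathModuleEmb O M (τ * π) x) ∧
      -- the identity component of `M̃ ≀ Sₙ` is `M^{⊗n}`, where `M = M̃_1`
      wreathModuleGrading O ℳ (1 : WreathGroup G n) =
        Submodule.map (wreathModuleEmb O M (1 : Equiv.Perm (Fin n)))
          (tensorGrading O (fun _ : Fin n => ℳ) (1 : Fin n → G)) ∧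
      -- `M̃ ≀ Sₙ` is a `(G ≀ Sₙ)`-graded `(A ≀ Sₙ, A' ≀ Sₙ)`-bimodule over `C^{⊗n}`
      IsGradedBimoduleOver O (wreathGrading O 𝒜 e s) (wreathGrading O 𝒜' e' s') Ψ
        (e.comp Z) (e'.comp Z') (wreathModuleGrading O ℳ) L R :=
  stmt10_general O G n C φ A A' 𝒜 𝒜' ζ ζ' M ℳ l r hM Φ hΦ Φ' hΦ' ΦM hΦM W e s hW W' e' s' hW'
    Ψ hΨ Z hZ Z' hZ' Lb hLb Rb hRb
end
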